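/- If T is a complete first-order theory with |T| < λ and T has SOP₃, then T is ⊲*_λ-maximal. -/

import Mathlib

open FirstOrder FirstOrder.Language Cardinal

namespace SopPaper

/-- A first-order formula with parameters from `M`, in free variables indexed by `Fin m`. -/
structure ParamFormula (L : FirstOrder.Language.{0, 0}) (M : Type*) [L.Structure M] (m : ℕ) where
  k : ℕ
  toFormula : L.Formula (Fin m ⊕ Fin k)
  par : Fin k → M

/-- Realization of a formula with parameters at a tuple `e`. -/
def ParamFormula.Realize {L : FirstOrder.Language.{0, 0}} {M : Type*} [L.Structure M] {m : ℕ}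
    (ψ : ParamFormula L M m) (e : Fin m → M) : Prop :=
  ψ.toFormula.Realize (Sum.elim e ψ.par)

/-- `N` is a `lam`-saturated `L`-structure: every 1-type over a parameter set of
cardinality `< lam` which is finitely satisfiable in `N` is realized in `N`. -/
def IsSaturatedAt (L : FirstOrder.Language.{0, 0}) (N : Type) (S : L.Structure N)
    (lam : Cardinal.{0}) : Prop :=
  ∀ A : Set N, #A < lam →
    ∀ p : Set (@ParamFormula L N S 1),
      (∀ ψ ∈ p, ∀ j, ψ.par j ∈ A) →
      (∀ s : Finset (@ParamFormula L N S 1), ↑s ⊆ p →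
        ∃ e : Fin 1 → N, ∀ ψ ∈ s, ψ.Realize e) →
      ∃ e : Fin 1 → N, ∀ ψ ∈ p, ψ.Realize e

/-- An interpretation (syntactic data) of the language `L₁` in the language `L₀`:
a dimension, a domain formula, an equality formula, and formulas interpreting each
relation symbol and (the graph of) each function symbol. -/
structure Interpretation (L₀ L₁ : FirstOrder.Language.{0, 0}) where
  d : ℕ
  dom : L₀.Formula (Fin d)
  eqf : L₀.Formula (Fin d ⊕ Fin d)
  rel : ∀ n, L₁.Relations n → L₀.Formula (Fin n × Fin d)
  func : ∀ n, L₁.Functions n → L₀.Formula ((Fin n × Fin d) ⊕ Fin d)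

variable {L₀ L₁ L₂ : FirstOrder.Language.{0, 0}}

/-- The domain of the interpretation `I` in an `L₀`-structure `M`. -/
def Interpretation.Dom (I : Interpretation L₀ L₁) (M : Type) [L₀.Structure M] : Type :=
  {a : Fin I.d → M // I.dom.Realize a}

/-- The `L₁`-structure `N` is (isomorphic to) the model `M^[I]` interpreted by `I` inside the
`L₀`-structure `M`, as witnessed by the projection `g` from the domain of `I` in `M` onto `N`. -/
def Interpretation.Represents (I : Interpretation L₀ L₁) (M : Type) [L₀.Structure M]
    (N : Type) (S : L₁.Structure N) (g : I.Dom M → N) : Prop :=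
  Function.Surjective g ∧
  (∀ a b : I.Dom M, g a = g b ↔ I.eqf.Realize (Sum.elim a.1 b.1)) ∧
  (∀ (n : ℕ) (r : L₁.Relations n) (f : Fin n → I.Dom M),
      S.RelMap r (fun i => g (f i)) ↔ (I.rel n r).Realize fun p => (f p.1).1 p.2) ∧
  (∀ (n : ℕ) (F : L₁.Functions n) (f : Fin n → I.Dom M) (b : I.Dom M),
      S.funMap F (fun i => g (f i)) = g b ↔
        (I.func n F).Realize (Sum.elim (fun p => (f p.1).1 p.2) b.1))

/-- `I` is an interpretation of the theory `T₁` in the theory `T₀`: in every model of `T₀`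
the interpreted structure exists and is a model of `T₁`. -/
def Interpretation.InterpretsIn (I : Interpretation L₀ L₁) (T₀ : L₀.Theory)
    (T₁ : L₁.Theory) : Prop :=
  ∀ M : Theory.ModelType.{0, 0, 0} T₀,
    ∃ (N : Theory.ModelType.{0, 0, 0} T₁) (g : I.Dom M → N),
      I.Represents M N inferInstance g

/-- The cardinality of a theory (together with its language), `|T|`. -/
def theoryCard {L : FirstOrder.Language.{0, 0}} (T : L.Theory) : Cardinal.{0} :=
  L.card + #T + ℵ₀

/-- Any model of `T₁` and any model of `T₂` occur (up to elementary equivalence) jointly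
interpreted in a single model of `T₀`; this is the extra demand made on the witnessing theory
when `T₁`, `T₂` are not necessarily complete. -/
def JointModels (T₀ : L₀.Theory) (T₁ : L₁.Theory) (T₂ : L₂.Theory)
    (I₁ : Interpretation L₀ L₁) (I₂ : Interpretation L₀ L₂) : Prop :=
  ∀ (A₁ : Theory.ModelType.{0, 0, 0} T₁) (A₂ : Theory.ModelType.{0, 0, 0} T₂),
    ∃ (M : Theory.ModelType.{0, 0, 0} T₀) (N₁ : Theory.ModelType.{0, 0, 0} T₁)
      (g₁ : I₁.Dom M → N₁) (N₂ : Theory.ModelType.{0, 0, 0} T₂) (g₂ : I₂.Dom M → N₂),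
      I₁.Represents M N₁ inferInstance g₁ ∧ I₂.Represents M N₂ inferInstance g₂ ∧
      (N₁ ≅[L₁] A₁) ∧ (N₂ ≅[L₂] A₂)

/-- The saturation-transfer property: whenever `M ⊨ T₀` is `kap`-saturated (no demand when
`kap = 0`) and the interpreted model `M^[I₂]` is `lam`-saturated, the interpreted model
`M^[I₁]` is `mu`-saturated. -/
def TransferClause (T₀ : L₀.Theory) (I₁ : Interpretation L₀ L₁) (I₂ : Interpretation L₀ L₂)
    (lam mu kap : Cardinal.{0}) : Prop :=
  ∀ M : Theory.ModelType.{0, 0, 0} T₀,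
    (kap = 0 ∨ IsSaturatedAt L₀ M inferInstance kap) →
    ∀ (N₁ : Type) (S₁ : L₁.Structure N₁) (g₁ : I₁.Dom M → N₁)
      (N₂ : Type) (S₂ : L₂.Structure N₂) (g₂ : I₂.Dom M → N₂),
      I₁.Represents M N₁ S₁ g₁ → I₂.Represents M N₂ S₂ g₂ →
      IsSaturatedAt L₂ N₂ S₂ lam → IsSaturatedAt L₁ N₁ S₁ mu

/-- `T₁ ⊲*_{λ,μ,κ} T₂`. -/
def TriangleStar (T₁ : L₁.Theory) (T₂ : L₂.Theory) (lam mu kap : Cardinal.{0}) : Prop :=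
  ∃ (L₀ : FirstOrder.Language.{0, 0}) (T₀ : L₀.Theory)
    (I₁ : Interpretation L₀ L₁) (I₂ : Interpretation L₀ L₂),
    theoryCard T₀ ≤ theoryCard T₁ + theoryCard T₂ ∧
    I₁.InterpretsIn T₀ T₁ ∧ I₂.InterpretsIn T₀ T₂ ∧
    JointModels T₀ T₁ T₂ I₁ I₂ ∧
    TransferClause T₀ I₁ I₂ lam mu kap

/-- `T` is `⊲*_λ`-maximal: `T' ⊲*_λ T` for every theory `T'` with `|T'| < λ`. -/
def TriangleStarMaximal {L : FirstOrder.Language.{0, 0}} (T : L.Theory)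
    (lam : Cardinal.{0}) : Prop :=
  ∀ (L' : FirstOrder.Language.{0, 0}) (T' : L'.Theory), theoryCard T' < lam →
    TriangleStar T' T lam lam 0

/-- The language of trees: a single binary relation `<`. -/
inductive TreeRel : ℕ → Type
  | lt : TreeRel 2

/-- The language of trees. -/
def Ltr : FirstOrder.Language.{0, 0} := ⟨fun _ => Empty, TreeRel⟩

/-- The tree order of an `Ltr`-structure. -/
def treeLt {M : Type*} [Ltr.Structure M] (x y : M) : Prop :=
  Structure.RelMap (L := Ltr) (TreeRel.lt : Ltr.Relations 2) ![x, y]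

/-- `M` is a tree: `<` is a (strict) partial order in which the predecessors of any element
are linearly ordered. -/
def IsTreeStructure (M : Type*) [Ltr.Structure M] : Prop :=
  (∀ x : M, ¬ treeLt x x) ∧
  (∀ x y z : M, treeLt x y → treeLt y z → treeLt x z) ∧
  (∀ x y z : M, treeLt y x → treeLt z x → treeLt y z ∨ treeLt z y ∨ y = z)

/-- The theory of trees: all sentences true in every tree. -/
def Ttr : Ltr.Theory :=
  {σ | ∀ (M : Type) (S : Ltr.Structure M), Nonempty M → @IsTreeStructure M S →
    @Sentence.Realize Ltr M S σ}

/-- `T'` is the model completion of `T`. -/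
def IsModelCompletion {L : FirstOrder.Language.{0, 0}} (T T' : L.Theory) : Prop :=
  (∀ N : Theory.ModelType.{0, 0, 0} T', (N : Type) ⊨ T) ∧
  (∀ M : Theory.ModelType.{0, 0, 0} T, ∃ N : Theory.ModelType.{0, 0, 0} T',
      Nonempty ((M : Type) ↪[L] (N : Type))) ∧
  (∀ (M N : Theory.ModelType.{0, 0, 0} T') (f : (M : Type) ↪[L] (N : Type)) (k : ℕ)
      (ψ : L.Formula (Fin k)) (v : Fin k → M),
      ψ.Realize (f ∘ v) ↔ ψ.Realize v) ∧
  (∀ (A : Theory.ModelType.{0, 0, 0} T) (N₁ N₂ : Theory.ModelType.{0, 0, 0} T')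
      (f₁ : (A : Type) ↪[L] (N₁ : Type)) (f₂ : (A : Type) ↪[L] (N₂ : Type)) (k : ℕ)
      (ψ : L.Formula (Fin k)) (v : Fin k → A),
      ψ.Realize (f₁ ∘ v) ↔ ψ.Realize (f₂ ∘ v))


/-- `⟨a_i : i < ω⟩` is an indiscernible sequence of `m`-tuples in `M`. -/
def Indiscernible {L : FirstOrder.Language.{0, 0}} {M : Type*} [L.Structure M] {m : ℕ}
    (a : ℕ → Fin m → M) : Prop :=
  ∀ (k : ℕ) (ψ : L.Formula (Fin k × Fin m)) (i j : Fin k → ℕ),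
    StrictMono i → StrictMono j →
    (ψ.Realize (fun p => a (i p.1) p.2) ↔ ψ.Realize (fun p => a (j p.1) p.2))

/-- `φ(x̄,ȳ)` (with `lg(x̄) = lg(ȳ) = m`) exemplifies SOP₃ in the structure `M`: it defines
on `M` a directed graph with an infinite indiscernible chain and with no cycles of
length `3`. -/
def ExemplifiesSOP3 {L : FirstOrder.Language.{0, 0}} {m : ℕ}
    (φ : L.Formula (Fin m ⊕ Fin m)) (M : Type*) [L.Structure M] : Prop :=
  (∃ a : ℕ → Fin m → M, Indiscernible (L := L) a ∧
      ∀ i j : ℕ, i < j → φ.Realize (Sum.elim (a i) (a j))) ∧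
  ¬ ∃ x₀ x₁ x₂ : Fin m → M,
      φ.Realize (Sum.elim x₀ x₁) ∧ φ.Realize (Sum.elim x₁ x₂) ∧ φ.Realize (Sum.elim x₂ x₀)

/-!
A type `p` of `T'` is realized by walking up a tree whose nodes are finite lists of formulas of
`T'` with parameters: from each node one can step to a child implying any prescribed member of `p`,
so `p` is realized once every chain of fewer than `λ` nodes consistent with `p` has an upper bound.

Such bounds come from the saturation of a model of `T`. A tree of finite height is well-bracketed:
reading its opening and closing brackets from left to right places the nodes as nested intervals
of a linear order, and by compactness some model of `T` contains a chain of the SOP₃ digraph of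
that order type. A chain of nodes then becomes a cut between opening and closing brackets, a point
filling the cut is approximated by the nodes whose intervals contain it, and the absence of
directed triangles, in place of transitivity, is what makes such a point determine a node.

The theory witnessing `T' ⊲*_λ T` consists of the sentences true in all the finite-height pictures
of large height; its nonstandard nodes form a tree in which the approximating process does not run
out of height, and ultraproducts of the pictures show that any model of `T'` can be paired with any
model of `T`.
-/

section ClosedPreorders

/-- A preorder is `lam`-closed if each of its chains of cardinality below `lam` is bounded
above. -/
def IsChainClosed (Q : Type) [Preorder Q] (lam : Cardinal.{0}) : Prop :=
  ∀ c : Set Q, IsChain (· ≤ ·) c → #c < lam → BddAbove c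

theorem IsChainClosed.exists_forall_mem {Q P : Type} [Preorder Q] {lam : Cardinal.{0}}
    (hQ : IsChainClosed Q lam) (hP : #P < lam) {D : P → Set Q} (hup : ∀ i, IsUpperSet (D i))
    (hcof : ∀ i, IsCofinal (D i)) : ∃ q, ∀ i, q ∈ D i := by
  classical
  let _ : LinearOrder P := linearOrderOfSTO WellOrderingRel
  have hwf : WellFounded ((· < ·) : P → P → Prop) := WellOrderingRel.isWellOrder.wf
  obtain ⟨q₀, -⟩ := hQ ∅ IsChain.empty (by simpa using (zero_le).trans_lt hP)
  have : Nonempty Q := ⟨q₀⟩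
  let q : P → Q := hwf.fix fun i q => Classical.epsilon fun x => x ∈ D i ∧ ∀ j hj, q j hj ≤ x
  have hbdd : ∀ s : Set P, (∀ i ∈ s, ∀ j < i, q j ≤ q i) → BddAbove (q '' s) := by
    intro s hs
    refine hQ _ ?_ (mk_image_le.trans_lt ((mk_set_le s).trans_lt hP))
    rintro _ ⟨i, hi, rfl⟩ _ ⟨j, hj, rfl⟩ hij
    exact (lt_or_gt_of_ne (ne_of_apply_ne q hij)).imp (hs j hj i) (hs i hi j)
  have hq : ∀ i, q i ∈ D i ∧ ∀ j < i, q j ≤ q i := by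
    intro i
    induction i using hwf.induction with
    | _ i ih =>
      obtain ⟨b, hb⟩ := hbdd (Set.Iio i) fun j hj => (ih j hj).2
      obtain ⟨x, hx, hbx⟩ := hcof i b
      have := Classical.epsilon_spec (p := fun x => x ∈ D i ∧ ∀ j < i, q j ≤ x)
        ⟨x, hx, fun j hj => (hb ⟨j, hj, rfl⟩).trans hbx⟩
      rw [show q i = _ from hwf.fix_eq _ i]
      exact this
  obtain ⟨b, hb⟩ := hbdd Set.univ fun i _ => (hq i).2
  exact ⟨b, fun i => hup i (hb ⟨i, trivial, rfl⟩) (hq i).1⟩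

end ClosedPreorders

section IntervalCodings

/-- Cuts `(a, b)` of the relation `R` with both sides of cardinality below `lam` are filled as
soon as all their finite parts are. -/
def FillsCuts {X : Type} (R : X → X → Prop) (lam : Cardinal.{0}) : Prop :=
  ∀ {I J : Type} (a : I → X) (b : J → X), #I < lam → #J < lam →
    (∀ (s : Finset I) (t : Finset J), ∃ x, (∀ i ∈ s, R (a i) x) ∧ ∀ j ∈ t, R x (b j)) →
    ∃ x, (∀ i, R (a i) x) ∧ ∀ j, R x (b j)

/-- The nodes `x` of a tree-like preorder `Q` are coded by `R`-intervals from `opn x` to `cls x`,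
in such a way that every cut met in bounding the chains of the subtree `⋂ i, C i` determines a
node. The `C i` stand for the subtrees definable in an ambient structure. -/
structure IntervalCoding {Q X ι : Type} [Preorder Q] (R : X → X → Prop) (opn cls : Q → X)
    (C : ι → Set Q) : Prop where
  opn_opn : ∀ ⦃x y⦄, x < y → R (opn x) (opn y)
  opn_cls : ∀ ⦃x y⦄, y ≤ x → R (opn x) (cls y)
  le_of_rel : ∀ ⦃x y w e⦄, x ≤ w → y ≤ w → R (opn x) e → R e (opn y) → x ≤ y
  exists_isGreatest_rel : ∀ ⦃x y e⦄, x ≤ y → R (opn x) e →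
    ∃ c, IsGreatest {d | d ≤ y ∧ R (opn d) e} c
  isLowerSet : ∀ i, IsLowerSet (C i)
  exists_isGreatest_mem : ∀ ⦃x y⦄ i, x ≤ y → x ∈ C i → ∃ t, IsGreatest {d | d ≤ y ∧ d ∈ C i} t
  bddAbove : ∀ e, BddAbove {x | R (opn x) e ∧ R e (cls x)}

variable {Q X ι : Type} [Preorder Q] {R : X → X → Prop} {opn cls : Q → X} {C : ι → Set Q}
  {lam : Cardinal.{0}}

/- Filling the cut between the opening and the closing points of the chain yields an upper bound
that may leave the subtree; a second cut, below the points where it leaves each `C i`, brings it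
back. -/
theorem IntervalCoding.exists_mem_upperBounds (h : IntervalCoding R opn cls C)
    (hR : FillsCuts R lam) (hι : #ι < lam) {c : Set Q} [Nonempty c] [IsDirectedOrder c]
    [NoMaxOrder c] (hc : #c < lam) (hcC : ∀ x ∈ c, ∀ i, x ∈ C i) :
    ∃ q ∈ upperBounds c, ∀ i, q ∈ C i := by
  have exists_gt_finset : ∀ s : Finset c, ∃ y : c, ∀ x ∈ s, (x : Q) < y := by
    intro s
    obtain ⟨z, hz⟩ := s.exists_le
    obtain ⟨y, hy⟩ := exists_gt z
    exact ⟨y, fun x hx => (hz x hx).trans_lt hy⟩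
  obtain ⟨e, he⟩ := hR (fun x : c => opn x) (fun x : c => cls x) hc hc fun s t => by
    classical
    obtain ⟨y, hy⟩ := exists_gt_finset (s ∪ t)
    exact ⟨opn y, fun x hx => h.opn_opn (hy x (Finset.mem_union_left t hx)),
      fun x hx => h.opn_cls (hy x (Finset.mem_union_right s hx)).le⟩
  obtain ⟨b, hb⟩ := h.bddAbove e
  have hcb : ∀ x : c, (x : Q) ≤ b := fun x => hb ⟨he.1 x, he.2 x⟩
  obtain ⟨x₀⟩ := ‹Nonempty c›
  choose t ht using fun i => h.exists_isGreatest_mem i (hcb x₀) (hcC x₀ x₀.2 i)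
  obtain ⟨e', hxe', he't⟩ := hR (fun x : c => opn x) (fun i => opn (t i)) hc hι fun s _ => by
    obtain ⟨y, hy⟩ := exists_gt_finset s
    obtain ⟨z, hz⟩ := exists_gt y
    exact ⟨opn y, fun x hx => h.opn_opn (hy x hx),
      fun i _ => h.opn_opn ((Subtype.coe_lt_coe.2 hz).trans_le ((ht i).2 ⟨hcb z, hcC z z.2 i⟩))⟩
  obtain ⟨q, hq⟩ := h.exists_isGreatest_rel (hcb x₀) (hxe' x₀)
  exact ⟨q, fun x hx => hq.2 ⟨hcb ⟨x, hx⟩, hxe' ⟨x, hx⟩⟩,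
    fun i => h.isLowerSet i (h.le_of_rel hq.1.1 (ht i).1.1 hq.1.2 (he't i)) (ht i).1.2⟩

theorem IntervalCoding.isChainClosed (h : IntervalCoding R opn cls C) (hR : FillsCuts R lam)
    (hι : #ι < lam) (hne : ∃ q, ∀ i, q ∈ C i) : IsChainClosed {q // ∀ i, q ∈ C i} lam := by
  intro c hchain hc
  rcases c.eq_empty_or_nonempty with rfl | hcne
  · exact @bddAbove_empty _ _ (nonempty_subtype.2 hne)
  by_cases hmax : ∃ x ∈ c, ∀ y ∈ c, y ≤ x
  · obtain ⟨x, -, hx⟩ := hmax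
    exact ⟨x, hx⟩
  push Not at hmax
  have : Nonempty (Subtype.val '' c) := (hcne.image _).to_subtype
  have : NoMaxOrder (Subtype.val '' c) := ⟨by
    rintro ⟨_, x, hx, rfl⟩
    obtain ⟨y, hy, hyx⟩ := hmax x hx
    exact ⟨⟨_, y, hy, rfl⟩, lt_of_le_not_ge ((hchain.total hx hy).resolve_right hyx) hyx⟩⟩
  have : IsDirectedOrder (Subtype.val '' c) := ⟨by
    rintro ⟨_, x, hx, rfl⟩ ⟨_, y, hy, rfl⟩
    rcases hchain.total hx hy with hxy | hyx
    · exact ⟨⟨_, y, hy, rfl⟩, hxy, le_rfl⟩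
    · exact ⟨⟨_, x, hx, rfl⟩, le_rfl, hyx⟩⟩
  obtain ⟨q, hq, hqC⟩ := h.exists_mem_upperBounds hR hι (c := Subtype.val '' c)
    (mk_image_le.trans_lt hc) (by rintro _ ⟨x, -, rfl⟩; exact x.2)
  exact ⟨⟨q, hqC⟩, fun x hx => hq ⟨x, hx, rfl⟩⟩

end IntervalCodings

section Closures

variable {L : FirstOrder.Language.{0, 0}} {α : Type} {M N : Type*} [L.Structure M]
  [L.Structure N] [Nonempty M] [Nonempty N]

theorem realize_exClosure_iff [DecidableEq α] (ψ : L.Formula α) :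
    M ⊨ ψ.exClosure ↔ ∃ v : α → M, ψ.Realize v := by
  rw [← Formula.exists_realize_equivSentence_iff_realize_exClosure]
  exact exists_congr fun v => letI := constantsOn.structure v; Formula.realize_equivSentence M ψ

theorem exists_realize_congr (h : M ≅[L] N) (ψ : L.Formula α) :
    (∃ v : α → M, ψ.Realize v) ↔ ∃ v : α → N, ψ.Realize v := by
  classical
  rw [← realize_exClosure_iff, ← realize_exClosure_iff]
  exact elementarilyEquivalent_iff.1 h _

theorem realize_not_exClosure_not [DecidableEq α] {ψ : L.Formula α} :
    M ⊨ (Formula.not ψ.not.exClosure : L.Sentence) ↔ ∀ v : α → M, ψ.Realize v := by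
  rw [Sentence.realize_not, realize_exClosure_iff]
  simp only [Formula.realize_not, not_exists, not_not]

end Closures

section Saturation

variable {L : FirstOrder.Language.{0, 0}} {N : Type} [S : L.Structure N] {m : ℕ}

theorem exists_paramFormula_realize_iff {J : Type} (a : J → N) (ψ : L.Formula (J ⊕ Fin m)) :
    ∃ χ : ParamFormula L N m, (∀ j, χ.par j ∈ Set.range a) ∧
      ∀ x, χ.Realize x ↔ ψ.Realize (Sum.elim a x) := by
  classical
  let P := ψ.freeVarFinset.toLeft
  let f : ψ.freeVarFinset → Fin m ⊕ Fin P.card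
    | ⟨.inl j, hj⟩ => .inr (P.equivFin ⟨j, Finset.mem_toLeft.2 hj⟩)
    | ⟨.inr i, _⟩ => .inl i
  refine ⟨⟨P.card, ψ.restrictFreeVar f, fun j => a (P.equivFin.symm j)⟩,
    fun j => Set.mem_range_self _, fun x => BoundedFormula.realize_restrictFreeVar _ ?_⟩
  rintro ⟨j | i, hj⟩ <;> simp [f]

/-- Make the first free variable of a formula a parameter. -/
def headVar {J : Type} : J ⊕ Fin (m + 1) → (J ⊕ Fin 1) ⊕ Fin m :=
  Sum.elim (fun j => .inl (.inl j)) (Fin.cons (.inl (.inr 0)) .inr)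

theorem realize_relabel_headVar {J : Type} (ψ : L.Formula (J ⊕ Fin (m + 1))) (a : J → N)
    (x : Fin 1 → N) (y : Fin m → N) :
    (ψ.relabel headVar).Realize (Sum.elim (Sum.elim a x) y) ↔
      ψ.Realize (Sum.elim a (Fin.cons (x 0) y)) := by
  rw [Formula.realize_relabel]
  refine iff_of_eq (congrArg _ (funext ?_))
  rintro (j | i)
  · rfl
  · refine Fin.cases ?_ (fun i => ?_) i <;> rfl

theorem IsSaturatedAt.exists_forall_realize_one {lam : Cardinal.{0}}
    (hs : IsSaturatedAt L N S lam) {ι J : Type} (hJ : #J < lam) (a : J → N)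
    (ψ : ι → L.Formula (J ⊕ Fin 1))
    (hfin : ∀ s : Finset ι, ∃ x : Fin 1 → N, ∀ i ∈ s, (ψ i).Realize (Sum.elim a x)) :
    ∃ x : Fin 1 → N, ∀ i, (ψ i).Realize (Sum.elim a x) := by
  classical
  choose χ hpar hχ using fun i => exists_paramFormula_realize_iff a (ψ i)
  obtain ⟨x, hx⟩ := hs (Set.range a) (mk_range_le.trans_lt hJ) (Set.range χ)
    (Set.forall_mem_range.2 hpar) fun s hsp => by
      rw [← Set.image_univ] at hsp
      obtain ⟨t, -, rfl⟩ := Finset.subset_set_image_iff.1 hsp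
      obtain ⟨x, hx⟩ := hfin t
      exact ⟨x, Finset.forall_mem_image.2 fun i hi => (hχ i x).2 (hx i hi)⟩
  exact ⟨x, fun i => (hχ i x).1 (hx _ ⟨i, rfl⟩)⟩

theorem IsSaturatedAt.exists_forall_realize {lam : Cardinal.{0}} (hs : IsSaturatedAt L N S lam)
    (hlam : ℵ₀ ≤ lam) {ι J : Type} (hJ : #J < lam) (a : J → N) (ψ : ι → L.Formula (J ⊕ Fin m))
    (hfin : ∀ s : Finset ι, ∃ x : Fin m → N, ∀ i ∈ s, (ψ i).Realize (Sum.elim a x)) :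
    ∃ x : Fin m → N, ∀ i, (ψ i).Realize (Sum.elim a x) := by
  classical
  induction m generalizing J with
  | zero =>
    refine ⟨Fin.elim0, fun i => ?_⟩
    obtain ⟨x, hx⟩ := hfin {i}
    rw [Subsingleton.elim Fin.elim0 x]
    exact hx i (Finset.mem_singleton_self i)
  | succ m ih =>
    let proj (s : Finset ι) : L.Formula (J ⊕ Fin 1) :=
      Formula.iExs (Fin m) (Formula.iInf fun i : s => (ψ i).relabel headVar)
    have realize_proj : ∀ s x, (proj s).Realize (Sum.elim a x) ↔
        ∃ y, ∀ i ∈ s, (ψ i).Realize (Sum.elim a (Fin.cons (x 0) y)) := by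
      simp only [proj, Formula.realize_iExs, Formula.realize_iInf, realize_relabel_headVar,
        Subtype.forall, implies_true]
    obtain ⟨x, hx⟩ := hs.exists_forall_realize_one hJ a proj fun t => by
      obtain ⟨z, hz⟩ := hfin (t.biUnion id)
      refine ⟨fun _ => z 0, fun s hst => (realize_proj s _).2 ⟨Fin.tail z, fun i hi => ?_⟩⟩
      rw [Fin.cons_self_tail]
      exact hz i (Finset.mem_biUnion.2 ⟨s, hst, hi⟩)
    have hJ' : #(J ⊕ Fin 1) < lam := by
      rw [mk_sum, lift_id, lift_id]
      exact add_lt_of_lt hlam hJ ((lt_aleph0_of_finite _).trans_le hlam)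
    obtain ⟨y, hy⟩ := ih hJ' (Sum.elim a x) (fun i => (ψ i).relabel headVar) fun s => by
      simpa only [realize_relabel_headVar] using (realize_proj s x).1 (hx s)
    exact ⟨Fin.cons (x 0) y, fun i => (realize_relabel_headVar _ _ _ _).1 (hy i)⟩

theorem IsSaturatedAt.fillsCuts {lam : Cardinal.{0}} (hs : IsSaturatedAt L N S lam)
    (hlam : ℵ₀ ≤ lam) (φ : L.Formula (Fin m ⊕ Fin m)) :
    FillsCuts (fun x y : Fin m → N => φ.Realize (Sum.elim x y)) lam := by
  intro I J a b hI hJ hfin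
  let ψ : I ⊕ J → L.Formula (((I ⊕ J) × Fin m) ⊕ Fin m) := Sum.elim
    (fun i => φ.relabel (Sum.map (Prod.mk (.inl i)) id))
    (fun j => φ.relabel (Sum.elim .inr fun k => .inl (.inr j, k)))
  have realize_ψ : ∀ x k, (ψ k).Realize (Sum.elim (fun q => Sum.elim a b q.1 q.2) x) ↔
      k.elim (fun i => φ.Realize (Sum.elim (a i) x)) fun j => φ.Realize (Sum.elim x (b j)) := by
    rintro x (i | j)
    all_goals
      simp only [ψ, Sum.elim_inl, Sum.elim_inr, Formula.realize_relabel]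
      refine iff_of_eq (congrArg _ (funext ?_))
      rintro (_ | _) <;> rfl
  have hcard : #((I ⊕ J) × Fin m) < lam := by
    simp only [mk_prod, mk_sum, lift_id, mk_fin]
    exact mul_lt_of_lt hlam (add_lt_of_lt hlam hI hJ) (natCast_lt_aleph0.trans_le hlam)
  obtain ⟨x, hx⟩ := hs.exists_forall_realize hlam hcard _ ψ fun s => by
    obtain ⟨x, hxa, hxb⟩ := hfin s.toLeft s.toRight
    refine ⟨x, fun k hk => (realize_ψ x k).2 ?_⟩
    rcases k with i | j
    · exact hxa i (Finset.mem_toLeft.2 hk)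
    · exact hxb j (Finset.mem_toRight.2 hk)
  exact ⟨x, fun i => (realize_ψ x (.inl i)).1 (hx _), fun j => (realize_ψ x (.inr j)).1 (hx _)⟩

end Saturation

section FinitarySOP3

/-- The first-order content of SOP₃ in a structure: `φ` has arbitrarily long finite transitive
chains and no directed triangle. Unlike `ExemplifiesSOP3`, it passes to elementarily equivalent
structures. -/
structure FinitarySOP3 {L : FirstOrder.Language.{0, 0}} {m : ℕ} (φ : L.Formula (Fin m ⊕ Fin m))
    (M : Type*) [L.Structure M] : Prop where
  exists_chain : ∀ n, ∃ a : Fin n → Fin m → M, ∀ i j, i < j → φ.Realize (Sum.elim (a i) (a j))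
  no_triangle : ∀ x y z : Fin m → M, φ.Realize (Sum.elim x y) → φ.Realize (Sum.elim y z) →
    ¬ φ.Realize (Sum.elim z x)

variable {L : FirstOrder.Language.{0, 0}} {m : ℕ} {φ : L.Formula (Fin m ⊕ Fin m)}

theorem ExemplifiesSOP3.finitarySOP3 {M : Type*} [L.Structure M] (h : ExemplifiesSOP3 φ M) :
    FinitarySOP3 φ M where
  exists_chain n := by
    obtain ⟨⟨a, -, ha⟩, -⟩ := h
    exact ⟨fun i => a i, fun i j hij => ha i j hij⟩
  no_triangle x y z hxy hyz hzx := h.2 ⟨x, y, z, hxy, hyz, hzx⟩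

/-- The formula stating that a family of `m`-tuples is a homomorphism from the finite graph `E` to
the graph defined by `φ`. -/
noncomputable def homFormula (φ : L.Formula (Fin m ⊕ Fin m)) {ι : Type} [Finite ι]
    (E : ι → ι → Prop) : L.Formula (ι × Fin m) :=
  Formula.iInf fun p : {p : ι × ι // E p.1 p.2} =>
    φ.relabel (Sum.elim (Prod.mk p.1.1) (Prod.mk p.1.2))

theorem exists_realize_homFormula_iff {M : Type*} [L.Structure M] {ι : Type} [Finite ι]
    (E : ι → ι → Prop) : (∃ v : ι × Fin m → M, (homFormula φ E).Realize v) ↔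
      ∃ a : ι → Fin m → M, ∀ i j, E i j → φ.Realize (Sum.elim (a i) (a j)) := by
  simp only [homFormula, Formula.realize_iInf, Formula.realize_relabel, Sum.comp_elim,
    Subtype.forall, Prod.forall]
  exact (Equiv.curry ι (Fin m) M).exists_congr fun v => Iff.rfl

theorem exists_hom_congr {M N : Type*} [L.Structure M] [L.Structure N] [Nonempty M]
    [Nonempty N] (h : M ≅[L] N) {ι : Type} [Finite ι] (E : ι → ι → Prop) :
    (∃ a : ι → Fin m → M, ∀ i j, E i j → φ.Realize (Sum.elim (a i) (a j))) ↔
      ∃ a : ι → Fin m → N, ∀ i j, E i j → φ.Realize (Sum.elim (a i) (a j)) := by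
  rw [← exists_realize_homFormula_iff, ← exists_realize_homFormula_iff]
  exact exists_realize_congr h _

theorem FinitarySOP3.of_elementarilyEquivalent {M N : Type*} [L.Structure M] [L.Structure N]
    [Nonempty M] [Nonempty N] (hM : FinitarySOP3 φ M) (h : M ≅[L] N) : FinitarySOP3 φ N where
  exists_chain n := (exists_hom_congr h (· < ·)).1 (hM.exists_chain n)
  no_triangle x y z hxy hyz hzx := by
    obtain ⟨a, ha⟩ := (exists_hom_congr h fun i j : Fin 3 => j = i + 1).2 ⟨![x, y, z], by
      rintro i _ rfl
      fin_cases i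
      exacts [hxy, hyz, hzx]⟩
    exact hM.no_triangle (a 0) (a 1) (a 2) (ha 0 1 rfl) (ha 1 2 rfl) (ha 2 0 rfl)

/-- The position of `x` relative to the elements of the finite set `s`. -/
def position {X : Type*} [LinearOrder X] (s : Finset X) (x : X) : Fin (s.card + 1) :=
  ⟨(s.filter (· < x)).card, Nat.lt_succ_of_le (Finset.card_filter_le _ _)⟩

theorem position_strictMonoOn {X : Type*} [LinearOrder X] (s : Finset X) :
    StrictMonoOn (position s) s := by
  intro x hx y _ hxy
  refine Finset.card_lt_card ((Finset.ssubset_iff_of_subset ?_).2 ⟨x, by simp_all⟩)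
  exact Finset.monotone_filter_right s fun z _ hz => hz.trans hxy

theorem FinitarySOP3.exists_chain_of_linearOrder {T : L.Theory} {A : Theory.ModelType.{0, 0, 0} T}
    (hA : FinitarySOP3 φ A) (X : Type) [LinearOrder X] :
    ∃ B : Theory.ModelType.{0, 0, 0} T, (B ≅[L] A) ∧
      ∃ a : X → Fin m → B, ∀ x y, x < y → φ.Realize (Sum.elim (a x) (a y)) := by
  let u : Ultrafilter (Finset X) := Ultrafilter.of Filter.atTop
  let B := (u : Filter (Finset X)).Product fun _ => (A : Type)
  have hBA : B ≅[L] A := elementarilyEquivalent_iff.2 fun σ => by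
    rw [Ultraproduct.sentence_realize, Filter.eventually_const]
  choose c hc using fun s : Finset X => hA.exists_chain (s.card + 1)
  let f (x : X) (k : Fin m) (s : Finset X) : A := c s (position s x) k
  suffices hf : ∀ x y, x < y → φ.Realize (Sum.elim (fun k => (f x k : B)) fun k => (f y k : B)) from
    ⟨hBA.symm.toModel T, hBA, fun x k => (f x k : B), hf⟩
  intro x y hxy
  have hsum : ∀ {C : Type} (g : (Finset X → A) → C),
      Sum.elim (fun k => g (f x k)) (fun k => g (f y k)) = fun i => g (Sum.elim (f x) (f y) i) :=
    fun g => (Sum.comp_elim g (f x) (f y)).symm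
  rw [hsum fun w => (w : B), Ultraproduct.realize_formula_cast]
  have hs : ∀ᶠ s in (u : Filter (Finset X)), x ∈ s ∧ y ∈ s := Ultrafilter.of_le _ <|
    (Filter.eventually_ge_atTop {x, y}).mono fun s hs => ⟨hs (by simp), hs (by simp)⟩
  filter_upwards [hs] with s hs
  rw [← hsum fun w => w s]
  exact hc s _ _ (position_strictMonoOn s hs.1 hs.2 hxy)

end FinitarySOP3

section Brackets

variable {U : Type*}

theorem exists_prefix_maximal {P : List U → Prop} {n : ℕ} (hn : ∀ d, P d → d.length ≤ n)
    {v : List U} (hv : P v) : ∃ u, P u ∧ ∀ d, P d → u <+: d → d <+: u := by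
  have hbdd : BddAbove (List.length '' {d | P d}) := ⟨n, Set.forall_mem_image.2 hn⟩
  obtain ⟨u, hu, hlen⟩ := Nat.sSup_mem (Set.Nonempty.image _ ⟨v, hv⟩) hbdd
  refine ⟨u, hu, fun d hd hud => ?_⟩
  rw [hud.eq_of_length_le (hlen ▸ le_csSup hbdd ⟨d, hd, rfl⟩)]

/-- The opening bracket of a node in the tree of lists, as a point of the lexicographic order. -/
def openPt (v : List U) : List (WithTop U) := v.map WithTop.some

/-- The closing bracket of a node in the tree of lists, as a point of the lexicographic order. -/
def closePt (v : List U) : List (WithTop U) := v.map WithTop.some ++ [⊤]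

variable [LinearOrder U]

theorem openPt_lt_openPt {v w : List U} (h : v <+: w) (h' : ¬ w <+: v) : openPt v < openPt w := by
  obtain ⟨u, rfl⟩ := h
  obtain _ | ⟨a, u⟩ := u
  · simp at h'
  simpa [openPt] using List.append_left_lt (l₁ := openPt v) (List.nil_lt_cons (a : WithTop U) _)

theorem openPt_lt_closePt {v w : List U} (h : w <+: v) : openPt v < closePt w := by
  obtain ⟨u, rfl⟩ := h
  rw [openPt, closePt, List.map_append]
  refine List.append_left_lt ?_
  cases u with
  | nil => exact List.nil_lt_cons _ _
  | cons a u => exact List.Lex.rel (WithTop.coe_lt_top a)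

theorem prefix_or_closePt_lt (v w : List U) :
    (v <+: w ∨ w <+: v) ∨ closePt v < openPt w ∨ closePt w < openPt v := by
  induction w generalizing v with
  | nil => simp
  | cons b w ih =>
    cases v with
    | nil => simp
    | cons a v =>
      rcases lt_trichotomy a b with h | rfl | h
      · exact .inr (.inl (List.Lex.rel (WithTop.coe_lt_coe.2 h)))
      · simpa [openPt, closePt, List.cons_prefix_cons] using ih v
      · exact .inr (.inr (List.Lex.rel (WithTop.coe_lt_coe.2 h)))

end Brackets

section Quotients

/-- The map `h : M → N` presents the `L`-structure `N` as the quotient of (a reduct of) the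
`L₀`-structure `M` by the kernel of the unary function `ρ`. -/
structure IsQuotient {L L₀ : FirstOrder.Language.{0, 0}} (ι : L →ᴸ L₀) (ρ : L₀.Functions 1)
    {M N : Type*} [L₀.Structure M] [L.Structure N] (h : M → N) : Prop where
  surjective : Function.Surjective h
  eq_iff : ∀ x y, h x = h y ↔ Structure.funMap ρ ![x] = Structure.funMap ρ ![y]
  relMap_iff : ∀ {n : ℕ} (R : L.Relations n) (f : Fin n → M),
    Structure.RelMap R (fun i => h (f i)) ↔ Structure.RelMap (ι.onRelation R) f
  map_fun : ∀ {n : ℕ} (F : L.Functions n) (f : Fin n → M),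
    h (Structure.funMap (ι.onFunction F) f) = Structure.funMap F (fun i => h (f i))

/-- Translate an `L`-formula along `ι`, reading equality as equality of values of `ρ`. -/
def translate {L L₀ : FirstOrder.Language.{0, 0}} (ι : L →ᴸ L₀) (ρ : L₀.Functions 1) {α : Type} :
    ∀ {n : ℕ}, L.BoundedFormula α n → L₀.BoundedFormula α n
  | _, .falsum => .falsum
  | _, .equal t s => .equal (ρ.apply₁ (ι.onTerm t)) (ρ.apply₁ (ι.onTerm s))
  | _, .rel R ts => .rel (ι.onRelation R) fun i => ι.onTerm (ts i)
  | _, .imp f g => .imp (translate ι ρ f) (translate ι ρ g)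
  | _, .all f => .all (translate ι ρ f)

variable {L L₀ : FirstOrder.Language.{0, 0}} {ι : L →ᴸ L₀} {ρ : L₀.Functions 1}
  {M N : Type*} [L₀.Structure M] [L.Structure N] {h : M → N}

theorem IsQuotient.realize_term (hq : IsQuotient ι ρ h) {α : Type*} (t : L.Term α) (v : α → M) :
    h ((ι.onTerm t).realize v) = t.realize fun a => h (v a) := by
  induction t with
  | var => rfl
  | func F ts ih =>
    simp only [LHom.onTerm, Term.realize]
    rw [hq.map_fun]
    simp only [ih]

theorem IsQuotient.realize_translate (hq : IsQuotient ι ρ h) {α : Type} {n : ℕ}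
    (ψ : L.BoundedFormula α n) (v : α → M) (xs : Fin n → M) :
    (translate ι ρ ψ).Realize v xs ↔ ψ.Realize (fun a => h (v a)) (fun i => h (xs i)) := by
  have hsum : ∀ {k : ℕ} (xs : Fin k → M), (fun a => h (Sum.elim v xs a)) =
      Sum.elim (fun a => h (v a)) (fun i => h (xs i)) := by
    intro k xs
    funext a
    cases a <;> rfl
  induction ψ with
  | falsum => rfl
  | equal t s =>
    simp only [translate, BoundedFormula.Realize, Term.realize_functions_apply₁, ← hq.eq_iff,
      hq.realize_term, hsum]
  | rel R ts =>
    simp only [translate, BoundedFormula.Realize, ← hq.relMap_iff, hq.realize_term, hsum]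
  | imp f g ihf ihg => simp only [translate, BoundedFormula.Realize, ihf, ihg]
  | all f ih =>
    simp only [translate, BoundedFormula.Realize, ih]
    refine ⟨fun H y => ?_, fun H x => ?_⟩
    · obtain ⟨x, rfl⟩ := hq.surjective y
      convert H x using 1
      exact (Fin.comp_snoc h xs x).symm
    · convert H (h x) using 1
      exact Fin.comp_snoc h xs x

theorem IsQuotient.realize_translate_formula (hq : IsQuotient ι ρ h) {α : Type}
    (ψ : L.Formula α) (v : α → M) :
    Formula.Realize (translate ι ρ ψ) v ↔ ψ.Realize fun a => h (v a) := by
  rw [Formula.Realize, Formula.Realize, hq.realize_translate]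
  exact iff_of_eq (congrArg _ (Subsingleton.elim _ _))

/-- The formula stating that `ψ` holds, in the quotient by the kernel of `ρ`, of the values of the
terms `s` and `t`. -/
def quotientFormula (ι : L →ᴸ L₀) (ρ : L₀.Functions 1) {α β γ : Type} (ψ : L.Formula (β ⊕ γ))
    (s : β → L₀.Term α) (t : γ → L₀.Term α) : L₀.Formula α :=
  BoundedFormula.subst (translate ι ρ ψ) (Sum.elim s t)

theorem IsQuotient.realize_quotientFormula (hq : IsQuotient ι ρ h) {α β γ : Type}
    (ψ : L.Formula (β ⊕ γ)) (s : β → L₀.Term α) (t : γ → L₀.Term α) (v : α → M) :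
    (quotientFormula ι ρ ψ s t).Realize v ↔
      ψ.Realize (Sum.elim (fun i => h ((s i).realize v)) fun i => h ((t i).realize v)) := by
  refine (BoundedFormula.realize_subst.trans (hq.realize_translate_formula ψ _)).trans
    (iff_of_eq (congrArg _ (funext ?_)))
  rintro (i | i) <;> rfl

theorem IsQuotient.realize_translate_sentence (hq : IsQuotient ι ρ h) (σ : L.Sentence) :
    M ⊨ (translate ι ρ σ : L₀.Sentence) ↔ N ⊨ σ := by
  rw [Sentence.Realize, Sentence.Realize, hq.realize_translate_formula]
  exact iff_of_eq (congrArg _ (Subsingleton.elim _ _))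

theorem exists_isQuotient (ι : L →ᴸ L₀) (ρ : L₀.Functions 1) (M : Type) [L₀.Structure M]
    (hrel : ∀ {n : ℕ} (R : L.Relations n) (f : Fin n → M),
      Structure.RelMap (ι.onRelation R) f ↔
        Structure.RelMap (ι.onRelation R) fun i => Structure.funMap ρ ![f i])
    (hfun : ∀ {n : ℕ} (F : L.Functions n) (f : Fin n → M),
      Structure.funMap ρ ![Structure.funMap (ι.onFunction F) f] =
        Structure.funMap ρ
          ![Structure.funMap (ι.onFunction F) fun i => Structure.funMap ρ ![f i] ]) :
    ∃ (N : Type) (_ : L.Structure N) (h : M → N), IsQuotient ι ρ h := by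
  let S : L.Structure (Set.range fun x : M => Structure.funMap ρ ![x]) :=
    { funMap := fun F v =>
        ⟨Structure.funMap ρ ![Structure.funMap (ι.onFunction F) fun i => (v i : M)], _, rfl⟩
      RelMap := fun R v => Structure.RelMap (ι.onRelation R) fun i => (v i : M) }
  refine ⟨_, S, fun x => ⟨_, x, rfl⟩, ?_, ?_, ?_, ?_⟩
  · rintro ⟨_, x, rfl⟩
    exact ⟨x, rfl⟩
  · exact fun x y => Subtype.ext_iff
  · exact fun R f => (hrel R f).symm
  · exact fun F f => Subtype.ext (hfun F f)

/-- The one-dimensional interpretation that reads the symbols of `L` through `ι` and equality as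
equality of values of `ρ`. -/
def quotientInterpretation (ι : L →ᴸ L₀) (ρ : L₀.Functions 1) : Interpretation L₀ L where
  d := 1
  dom := ⊤
  eqf := (ρ.apply₁ (.var (.inl 0))).equal (ρ.apply₁ (.var (.inr 0)))
  rel _ R := (ι.onRelation R).formula fun i => .var (i, 0)
  func _ F := (ρ.apply₁ (.func (ι.onFunction F) fun i => .var (.inl (i, 0)))).equal
    (ρ.apply₁ (.var (.inr 0)))

/-- The elements of `M` are the points of the domain of `quotientInterpretation ι ρ`. -/
def domEquiv (ι : L →ᴸ L₀) (ρ : L₀.Functions 1) (M : Type) [L₀.Structure M] :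
    M ≃ (quotientInterpretation ι ρ).Dom M where
  toFun x := ⟨fun _ => x, Formula.realize_top.2 trivial⟩
  invFun a := a.1 (0 : Fin 1)
  left_inv _ := rfl
  right_inv a := Subtype.ext (funext fun i => congrArg a.1 (Subsingleton.elim (0 : Fin 1) i))

section Represents

variable {M : Type} [L₀.Structure M]

theorem realize_quotientInterpretation_eqf (x y : M) : (quotientInterpretation ι ρ).eqf.Realize
      (Sum.elim (domEquiv ι ρ M x).1 (domEquiv ι ρ M y).1) ↔
    Structure.funMap ρ ![x] = Structure.funMap ρ ![y] := by
  simp only [quotientInterpretation, Formula.realize_equal, Term.realize_functions_apply₁]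
  rfl

theorem realize_quotientInterpretation_rel {n : ℕ} (R : L.Relations n) (f : Fin n → M) :
    ((quotientInterpretation ι ρ).rel n R).Realize (fun p => (domEquiv ι ρ M (f p.1)).1 p.2) ↔
      Structure.RelMap (ι.onRelation R) f := by
  simp only [quotientInterpretation, Formula.realize_rel]
  rfl

theorem realize_quotientInterpretation_func {n : ℕ} (F : L.Functions n) (f : Fin n → M) (y : M) :
    ((quotientInterpretation ι ρ).func n F).Realize
        (Sum.elim (fun p => (domEquiv ι ρ M (f p.1)).1 p.2) (domEquiv ι ρ M y).1) ↔
      Structure.funMap ρ ![Structure.funMap (ι.onFunction F) f] = Structure.funMap ρ ![y] := by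
  simp only [quotientInterpretation, Formula.realize_equal, Term.realize_functions_apply₁]
  rfl

theorem represents_iff_isQuotient {N : Type} [S : L.Structure N]
    (g : (quotientInterpretation ι ρ).Dom M → N) :
    (quotientInterpretation ι ρ).Represents M N S g ↔
      IsQuotient ι ρ fun x : M => g (domEquiv ι ρ M x) := by
  let e := domEquiv ι ρ M
  have forall_tuple : ∀ {n : ℕ} {P : (Fin n → (quotientInterpretation ι ρ).Dom M) → Prop},
      (∀ f, P f) ↔ ∀ f : Fin n → M, P fun i => e (f i) :=
    ((Equiv.refl _).arrowCongr e).forall_congr_right.symm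
  constructor
  · rintro ⟨hsurj, heq, hrel, hfun⟩
    exact ⟨hsurj.comp e.surjective,
      fun x y => (heq _ _).trans (realize_quotientInterpretation_eqf x y),
      fun R f => (hrel _ R _).trans (realize_quotientInterpretation_rel R f),
      fun F f => ((hfun _ F _ _).2 ((realize_quotientInterpretation_func F f _).2 rfl)).symm⟩
  · intro hq
    refine ⟨hq.surjective.of_comp,
      e.surjective.forall₂.2 fun x y =>
        (hq.eq_iff x y).trans (realize_quotientInterpretation_eqf x y).symm,
      fun n R => forall_tuple.2 fun f =>
        (hq.relMap_iff R f).trans (realize_quotientInterpretation_rel R f).symm,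
      fun n F => forall_tuple.2 fun f => e.surjective.forall.2 fun y => ?_⟩
    rw [← hq.map_fun]
    exact (hq.eq_iff _ _).trans (realize_quotientInterpretation_func F f y).symm

end Represents

end Quotients

section Language

/-- The operations on the nodes of a tree of lists of `L'`-formulas with parameters: projections
to the two sides, the empty list, the appending of an instance of a formula, and the endpoints of
the interval coding a node. -/
inductive BracketFun (L' : FirstOrder.Language.{0, 0}) (m : ℕ) : ℕ → Type
  | repLeft : BracketFun L' m 1
  | repRight : BracketFun L' m 1
  | nil : BracketFun L' m 0
  | snoc {k : ℕ} (ψ : L'.Formula (Fin 1 ⊕ Fin k)) : BracketFun L' m (k + 1)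
  | opn (j : Fin m) : BracketFun L' m 1
  | cls (j : Fin m) : BracketFun L' m 1

/-- The relations on the nodes of a tree of lists of formulas: `short k v` says that `v` can be
extended `k` times, `pre v w` that `v` is a prefix of `w`, and `sat x v` that `x` satisfies the
members of `v`. -/
inductive BracketRel : ℕ → Type
  | short (k : ℕ) : BracketRel 1
  | pre : BracketRel 2
  | sat : BracketRel 2

/-- The bracket language: `L'` and `L`, together with the symbols for a tree of lists of
`L'`-formulas whose nodes are coded by intervals of `m`-tuples of an `L`-structure. -/
abbrev bracketLang (L' L : FirstOrder.Language.{0, 0}) (m : ℕ) : FirstOrder.Language.{0, 0} :=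
  (L'.sum L).sum ⟨BracketFun L' m, fun n => BracketRel n⟩

/-- The inclusion of `L'` in the bracket language. -/
def leftHom (L' L : FirstOrder.Language.{0, 0}) (m : ℕ) : L' →ᴸ bracketLang L' L m :=
  LHom.sumInl.comp LHom.sumInl

/-- The inclusion of `L` in the bracket language. -/
def rightHom (L' L : FirstOrder.Language.{0, 0}) (m : ℕ) : L →ᴸ bracketLang L' L m :=
  LHom.sumInl.comp LHom.sumInr

variable {L' L : FirstOrder.Language.{0, 0}} {m : ℕ} {α : Type}

/-- A function symbol for a tree operation, in the bracket language. -/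
abbrev BracketFun.symbol {n : ℕ} (F : BracketFun L' m n) : (bracketLang L' L m).Functions n :=
  Sum.inr F

/-- A relation symbol for a tree relation, in the bracket language. -/
abbrev BracketRel.symbol {n : ℕ} (R : BracketRel n) : (bracketLang L' L m).Relations n :=
  Sum.inr R

/-- The term for the root of the tree. -/
def nilTerm : (bracketLang L' L m).Term α := .func BracketFun.nil.symbol Fin.elim0

/-- The term for the child of `t` given by an instance of `ψ`. -/
def snocTerm {k : ℕ} (ψ : L'.Formula (Fin 1 ⊕ Fin k)) (t : (bracketLang L' L m).Term α)
    (a : Fin k → (bracketLang L' L m).Term α) : (bracketLang L' L m).Term α :=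
  .func (BracketFun.snoc ψ).symbol (Fin.cons t a)

/-- The terms for the left endpoint of the interval coding `t`. -/
def opnTerm (t : (bracketLang L' L m).Term α) (j : Fin m) : (bracketLang L' L m).Term α :=
  (BracketFun.opn j).symbol.apply₁ t

/-- The terms for the right endpoint of the interval coding `t`. -/
def clsTerm (t : (bracketLang L' L m).Term α) (j : Fin m) : (bracketLang L' L m).Term α :=
  (BracketFun.cls j).symbol.apply₁ t

/-- The formula stating that `t` can be extended `k` times. -/
def shortFormula (k : ℕ) (t : (bracketLang L' L m).Term α) : (bracketLang L' L m).Formula α :=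
  (BracketRel.short k).symbol.formula₁ t

/-- The formula stating that `s` is a prefix of `t`. -/
def preFormula (s t : (bracketLang L' L m).Term α) : (bracketLang L' L m).Formula α :=
  BracketRel.pre.symbol.formula₂ s t

/-- The formula stating that `s` satisfies the members of `t`. -/
def satFormula (s t : (bracketLang L' L m).Term α) : (bracketLang L' L m).Formula α :=
  BracketRel.sat.symbol.formula₂ s t

/-- The formula stating that `ψ` holds of the left projections of `s` and `t`. -/
abbrev leftFormula {β γ : Type} (ψ : L'.Formula (β ⊕ γ)) (s : β → (bracketLang L' L m).Term α)
    (t : γ → (bracketLang L' L m).Term α) : (bracketLang L' L m).Formula α :=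
  quotientFormula (leftHom L' L m) BracketFun.repLeft.symbol ψ s t

/-- The formula stating that `φ` holds of the right projections of `s` and `t`. -/
abbrev rightFormula (φ : L.Formula (Fin m ⊕ Fin m)) (s t : Fin m → (bracketLang L' L m).Term α) :
    (bracketLang L' L m).Formula α :=
  quotientFormula (rightHom L' L m) BracketFun.repRight.symbol φ s t

/-- The formula stating that if `θ` has a solution in its second variable, then it has one that is
maximal for the prefix relation. -/
noncomputable def maximalFormula (θ : (bracketLang L' L m).Formula (α ⊕ Unit)) :
    (bracketLang L' L m).Formula α :=
  (θ.iExs Unit).imp ((θ ⊓ ((θ.relabel (Sum.map Sum.inl id)).imp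
    ((preFormula (.var (.inl (.inr ()))) (.var (.inr ()))).imp
      (preFormula (.var (.inr ())) (.var (.inl (.inr ())))))).iAlls Unit).iExs Unit)

theorem realize_maximalFormula {M : Type*} [(bracketLang L' L m).Structure M]
    (θ : (bracketLang L' L m).Formula (α ⊕ Unit)) (v : α → M) :
    (maximalFormula θ).Realize v ↔ (∃ x : M, θ.Realize (Sum.elim v fun _ => x)) →
      ∃ u : M, θ.Realize (Sum.elim v fun _ => u) ∧
        ∀ y : M, θ.Realize (Sum.elim v fun _ => y) →
          Structure.RelMap (L := bracketLang L' L m) BracketRel.pre.symbol ![u, y] →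
            Structure.RelMap (L := bracketLang L' L m) BracketRel.pre.symbol ![y, u] := by
  have sum_elim_comp : ∀ u y : M, Sum.elim (Sum.elim v fun _ : Unit => u) (fun _ : Unit => y) ∘
      Sum.map Sum.inl id = Sum.elim v fun _ => y := fun u y => by
    ext i
    cases i <;> rfl
  have funUnique_symm : ∀ x : M, (Equiv.funUnique Unit M).symm x = fun _ => x := fun _ => rfl
  simp only [maximalFormula, preFormula, Formula.realize_imp, Formula.realize_iExs,
    Formula.realize_iAlls, Formula.realize_inf, Formula.realize_relabel, Formula.realize_rel₂,
    Term.realize_var, ← (Equiv.funUnique Unit M).symm.exists_congr_right,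
    ← (Equiv.funUnique Unit M).symm.forall_congr_right, funUnique_symm, sum_elim_comp,
    Sum.elim_inl, Sum.elim_inr]

end Language

section StandardModels

variable {L' L : FirstOrder.Language.{0, 0}} {m : ℕ}

/-- The data from which the standard structures in the bracket language are built: a model of `T'`
with a linear order of its formulas with parameters, and a model of `T` in which `φ` has a long
chain and no directed triangle. -/
structure BracketData (T' : L'.Theory) (T : L.Theory) (φ : L.Formula (Fin m ⊕ Fin m)) where
  left : Theory.ModelType.{0, 0, 0} T'
  order : LinearOrder (ParamFormula L' left 1)
  right : Theory.ModelType.{0, 0, 0} T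
  chain : List (WithTop (ParamFormula L' left 1)) → Fin m → right
  chain_edge : ∀ x y, x < y → φ.Realize (Sum.elim (chain x) (chain y))
  no_triangle : ∀ x y z : Fin m → right, φ.Realize (Sum.elim x y) → φ.Realize (Sum.elim y z) →
    ¬ φ.Realize (Sum.elim z x)

namespace BracketData

variable {T' : L'.Theory} {T : L.Theory} {φ : L.Formula (Fin m ⊕ Fin m)}

instance (D : BracketData T' T φ) : LinearOrder (ParamFormula L' D.left 1) := D.order

/-- The universe of the standard structure of height `N`: an element has projections to both
sides and is a node of the tree of lists of length at most `N`. -/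
structure Carrier (D : BracketData T' T φ) (N : ℕ) where
  left : D.left
  right : D.right
  node : List (ParamFormula L' D.left 1)
  length_node_le : node.length ≤ N

variable (D : BracketData T' T φ) (N : ℕ)

/-- An element of the model of `T'`, as an element of the standard structure. -/
noncomputable def ofLeft (x : D.left) : D.Carrier N := ⟨x, Classical.arbitrary _, [], N.zero_le⟩

/-- An element of the model of `T`, as an element of the standard structure. -/
noncomputable def ofRight (x : D.right) : D.Carrier N := ⟨Classical.arbitrary _, x, [], N.zero_le⟩

/-- A list, cut off at length `N`, as an element of the standard structure. -/
noncomputable def ofList (w : List (ParamFormula L' D.left 1)) : D.Carrier N :=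
  ⟨Classical.arbitrary _, Classical.arbitrary _, w.take N, w.length_take_le N⟩

instance : Nonempty (D.Carrier N) := ⟨D.ofList N []⟩

noncomputable instance : L'.Structure (D.Carrier N) where
  funMap F v := D.ofLeft N (Structure.funMap F fun i => (v i).left)
  RelMap R v := Structure.RelMap R fun i => (v i).left

noncomputable instance : L.Structure (D.Carrier N) where
  funMap F v := D.ofRight N (Structure.funMap F fun i => (v i).right)
  RelMap R v := Structure.RelMap R fun i => (v i).right

/-- The tree operations of the standard structure. -/
noncomputable def treeFun : ∀ {n : ℕ}, BracketFun L' m n → (Fin n → D.Carrier N) → D.Carrier N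
  | _, .repLeft, v => D.ofLeft N (v 0).left
  | _, .repRight, v => D.ofRight N (v 0).right
  | _, .nil, _ => D.ofList N []
  | _, .snoc ψ, v => D.ofList N ((v 0).node ++ [⟨_, ψ, fun i => (v i.succ).left⟩])
  | _, .opn j, v => D.ofRight N (D.chain (openPt (v 0).node) j)
  | _, .cls j, v => D.ofRight N (D.chain (closePt (v 0).node) j)

/-- The tree relations of the standard structure. -/
def treeRel : ∀ {n : ℕ}, BracketRel n → (Fin n → D.Carrier N) → Prop
  | _, .short k, v => (v 0).node.length + k ≤ N
  | _, .pre, v => (v 0).node <+: (v 1).node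
  | _, .sat, v => ∀ ψ ∈ (v 1).node, ψ.Realize fun _ => (v 0).left

noncomputable instance :
    Language.Structure ⟨BracketFun L' m, fun n => BracketRel n⟩ (D.Carrier N) where
  funMap := D.treeFun N
  RelMap := D.treeRel N

theorem isQuotient_left :
    IsQuotient (leftHom L' L m) BracketFun.repLeft.symbol
      (Carrier.left : D.Carrier N → D.left) where
  surjective x := ⟨D.ofLeft N x, rfl⟩
  eq_iff x y := ⟨congrArg (D.ofLeft N),
    congrArg Carrier.left (a₁ := D.ofLeft N x.left) (a₂ := D.ofLeft N y.left)⟩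
  relMap_iff _ _ := Iff.rfl
  map_fun _ _ := rfl

theorem isQuotient_right :
    IsQuotient (rightHom L' L m) BracketFun.repRight.symbol
      (Carrier.right : D.Carrier N → D.right) where
  surjective x := ⟨D.ofRight N x, rfl⟩
  eq_iff x y := ⟨congrArg (D.ofRight N),
    congrArg Carrier.right (a₁ := D.ofRight N x.right) (a₂ := D.ofRight N y.right)⟩
  relMap_iff _ _ := Iff.rfl
  map_fun _ _ := rfl

section Realize

variable {D N} {α : Type} (v : α → D.Carrier N)

@[simp]
theorem node_realize_nilTerm : ((nilTerm : (bracketLang L' L m).Term α).realize v).node = [] :=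
  List.take_nil (i := N)

theorem node_realize_snocTerm {k : ℕ} (ψ : L'.Formula (Fin 1 ⊕ Fin k))
    {t : (bracketLang L' L m).Term α} (a : Fin k → (bracketLang L' L m).Term α)
    (ht : (t.realize v).node.length < N) :
    ((snocTerm ψ t a).realize v).node =
      (t.realize v).node ++ [ParamFormula.mk k ψ fun i => ((a i).realize v).left] :=
  List.take_of_length_le (by simpa using ht)

@[simp]
theorem right_realize_opnTerm (t : (bracketLang L' L m).Term α) (j : Fin m) :
    ((opnTerm t j).realize v).right = D.chain (openPt (t.realize v).node) j :=
  rfl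

@[simp]
theorem right_realize_clsTerm (t : (bracketLang L' L m).Term α) (j : Fin m) :
    ((clsTerm t j).realize v).right = D.chain (closePt (t.realize v).node) j :=
  rfl

@[simp]
theorem realize_shortFormula (k : ℕ) (t : (bracketLang L' L m).Term α) :
    (shortFormula k t).Realize v ↔ (t.realize v).node.length + k ≤ N :=
  Formula.realize_rel₁

@[simp]
theorem realize_preFormula (s t : (bracketLang L' L m).Term α) :
    (preFormula s t).Realize v ↔ (s.realize v).node <+: (t.realize v).node :=
  Formula.realize_rel₂

@[simp]
theorem realize_satFormula (s t : (bracketLang L' L m).Term α) :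
    (satFormula s t).Realize v ↔
      ∀ ψ ∈ (t.realize v).node, ψ.Realize fun _ => (s.realize v).left :=
  Formula.realize_rel₂

end Realize

end BracketData

theorem exists_bracketData {T' : L'.Theory} {T : L.Theory} {φ : L.Formula (Fin m ⊕ Fin m)}
    (hφ : ∀ A : Theory.ModelType.{0, 0, 0} T, FinitarySOP3 φ A)
    (A₁ : Theory.ModelType.{0, 0, 0} T') (A₂ : Theory.ModelType.{0, 0, 0} T) :
    ∃ D : BracketData T' T φ, D.left = A₁ ∧ (D.right ≅[L] A₂) := by
  classical
  let _ : LinearOrder (ParamFormula L' A₁ 1) := linearOrderOfSTO WellOrderingRel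
  obtain ⟨B, hB, a, ha⟩ :=
    (hφ A₂).exists_chain_of_linearOrder (List (WithTop (ParamFormula L' A₁ 1)))
  exact ⟨⟨A₁, inferInstance, B, a, ha, (hφ B).no_triangle⟩, rfl, hB⟩

end StandardModels

section Theory

open Filter

variable {L' L : FirstOrder.Language.{0, 0}} {m : ℕ} {T' : L'.Theory} {T : L.Theory}
  {φ : L.Formula (Fin m ⊕ Fin m)}

/-- The bracket theory: the sentences that hold in the standard structures of all large enough
heights. -/
def bracketTheory (T' : L'.Theory) (T : L.Theory) (φ : L.Formula (Fin m ⊕ Fin m)) :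
    (bracketLang L' L m).Theory :=
  {σ | ∀ D : BracketData T' T φ, ∀ᶠ N in atTop, D.Carrier N ⊨ σ}

variable {M : Theory.ModelType.{0, 0, 0} (bracketTheory T' T φ)} {α : Type}

theorem realize_of_eventually_carrier (v : α → M) (χ : (bracketLang L' L m).Formula α)
    (h : ∀ D : BracketData T' T φ, ∀ᶠ N in atTop, ∀ w : α → D.Carrier N, χ.Realize w) :
    χ.Realize v := by
  classical
  have hσ : Formula.not χ.not.exClosure ∈ bracketTheory T' T φ := fun D =>
    (h D).mono fun N hN => by
      simpa only [realize_not_exClosure_not] using hN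
  exact realize_not_exClosure_not.1 (M.is_model.realize_of_mem _ hσ) v

theorem realize_of_carrier (v : α → M) (χ : (bracketLang L' L m).Formula α)
    (h : ∀ (D : BracketData T' T φ) (N : ℕ) (w : α → D.Carrier N), χ.Realize w) : χ.Realize v :=
  realize_of_eventually_carrier v χ fun D => .of_forall (h D)

end Theory

section Models

open Filter

variable {L' L : FirstOrder.Language.{0, 0}} {m : ℕ} {T' : L'.Theory} {T : L.Theory}
  {φ : L.Formula (Fin m ⊕ Fin m)} {M : Theory.ModelType.{0, 0, 0} (bracketTheory T' T φ)}
  {α : Type} {k : ℕ}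

/-- In a model of the bracket theory, `v` can be extended `k` times. -/
def Short (k : ℕ) (v : M) : Prop :=
  Structure.RelMap (L := bracketLang L' L m) (BracketRel.short k).symbol ![v]

/-- In a model of the bracket theory, `x` satisfies the members of `v`. -/
def Sat (x v : M) : Prop :=
  Structure.RelMap (L := bracketLang L' L m) BracketRel.sat.symbol ![x, v]

/-- The prefix relation of a model of the bracket theory. -/
instance : LE M where
  le v w := Structure.RelMap (L := bracketLang L' L m) BracketRel.pre.symbol ![v, w]

/-- The root of a model of the bracket theory. -/
def root (M : Theory.ModelType.{0, 0, 0} (bracketTheory T' T φ)) : M :=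
  (nilTerm : (bracketLang L' L m).Term M).realize id

/-- The child of `v` given by an instance of `ψ`, in a model of the bracket theory. Where the tree
has no room above `v`, that is, unless `Short 1 v`, this is not a proper extension of `v`. -/
def child (ψ : L'.Formula (Fin 1 ⊕ Fin k)) (v : M) (a : Fin k → M) : M :=
  (snocTerm ψ (.var v) fun i => .var (a i) : (bracketLang L' L m).Term M).realize id

@[simp]
theorem realize_shortFormula_iff_short {t : (bracketLang L' L m).Term α} {v : α → M} :
    (shortFormula k t).Realize v ↔ Short k (t.realize v) :=
  Formula.realize_rel₁

@[simp]
theorem realize_satFormula_iff_sat {s t : (bracketLang L' L m).Term α} {v : α → M} :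
    (satFormula s t).Realize v ↔ Sat (s.realize v) (t.realize v) :=
  Formula.realize_rel₂

@[simp]
theorem realize_preFormula_iff_le {s t : (bracketLang L' L m).Term α} {v : α → M} :
    (preFormula s t).Realize v ↔ s.realize v ≤ t.realize v :=
  Formula.realize_rel₂

instance : Preorder M where
  le_refl v := by
    simpa using realize_of_carrier (id : M → M) (preFormula (.var v) (.var v)) (by simp)
  le_trans u v w := by
    have := realize_of_carrier (id : M → M) ((preFormula (.var u) (.var v)).imp
      ((preFormula (.var v) (.var w)).imp (preFormula (.var u) (.var w)))) fun D N x => by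
        simpa using List.IsPrefix.trans
    simpa using this

theorem le_total_of_le {u v w : M} (hu : u ≤ w) (hv : v ≤ w) : u ≤ v ∨ v ≤ u := by
  have := realize_of_carrier (id : M → M) ((preFormula (.var u) (.var w)).imp
    ((preFormula (.var v) (.var w)).imp
      (preFormula (.var u) (.var v) ⊔ preFormula (.var v) (.var u)))) fun D N x => by
    simpa using List.prefix_or_prefix_of_prefix
  exact (by simpa using this : u ≤ w → v ≤ w → u ≤ v ∨ v ≤ u) hu hv

theorem Short.anti {v w : M} (hvw : v ≤ w) (hw : Short k w) : Short k v := by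
  have := realize_of_carrier (id : M → M) ((preFormula (.var v) (.var w)).imp
    ((shortFormula k (.var w)).imp (shortFormula k (.var v)))) fun D N x => by
    simpa using fun h : (x v).node <+: (x w).node => (Nat.add_le_add_right h.length_le k).trans
  exact (by simpa using this : v ≤ w → Short k w → Short k v) hvw hw

theorem Sat.anti {x v w : M} (hvw : v ≤ w) (hw : Sat x w) : Sat x v := by
  have := realize_of_carrier (id : M → M) ((preFormula (.var v) (.var w)).imp
    ((satFormula (.var x) (.var w)).imp (satFormula (.var x) (.var v)))) fun D N y => by
    simpa using fun (h : (y v).node <+: (y w).node) h' ψ hψ => h' ψ (h.subset hψ)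
  exact (by simpa using this : v ≤ w → Sat x w → Sat x v) hvw hw

theorem short_root (k : ℕ) : Short k (root M) := by
  have := realize_of_eventually_carrier (id : M → M) (shortFormula k nilTerm) fun D =>
    (eventually_ge_atTop k).mono fun N hN x => by simpa using hN
  simpa [root] using this

theorem sat_root (x : M) : Sat x (root M) := by
  simpa [root] using realize_of_carrier (id : M → M) (satFormula (.var x) nilTerm) (by simp)

section Child

variable (ψ : L'.Formula (Fin 1 ⊕ Fin k)) {v : M} (a : Fin k → M)

theorem le_child (hv : Short 1 v) : v ≤ child ψ v a := by
  have := realize_of_carrier (id : M → M) ((shortFormula 1 (.var v)).imp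
    (preFormula (.var v) (snocTerm ψ (.var v) fun i => .var (a i)))) fun D N x => by
    rw [Formula.realize_imp, BracketData.realize_shortFormula, BracketData.realize_preFormula]
    intro hlt
    exact BracketData.node_realize_snocTerm x ψ _ hlt ▸ List.prefix_append _ _
  exact (by simpa [child] using this : Short 1 v → v ≤ child ψ v a) hv

theorem short_child {n : ℕ} (hv : Short (n + 1) v) : Short n (child ψ v a) := by
  have := realize_of_carrier (id : M → M) ((shortFormula (n + 1) (.var v)).imp
    (shortFormula n (snocTerm ψ (.var v) fun i => .var (a i)))) fun D N x => by
    simp only [Formula.realize_imp, BracketData.realize_shortFormula]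
    intro hlt
    rw [BracketData.node_realize_snocTerm x ψ _ (by omega), List.length_append,
      List.length_singleton]
    omega
  exact (by simpa [child] using this : Short (n + 1) v → Short n (child ψ v a)) hv

theorem sat_child_iff {N : Type*} [L'.Structure N] {h : M → N}
    (hq : IsQuotient (leftHom L' L m) BracketFun.repLeft.symbol h) (hv : Short 1 v) (x : M) :
    Sat x (child ψ v a) ↔ Sat x v ∧ ψ.Realize (Sum.elim (fun _ => h x) fun i => h (a i)) := by
  have := realize_of_carrier (id : M → M) ((shortFormula 1 (.var v)).imp
    ((satFormula (.var x) (snocTerm ψ (.var v) fun i => .var (a i))).iff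
      (satFormula (.var x) (.var v) ⊓
        leftFormula ψ (fun _ => .var x) fun i => .var (a i)))) fun D N y => by
    simp only [Formula.realize_imp, Formula.realize_iff, Formula.realize_inf,
      BracketData.realize_shortFormula, BracketData.realize_satFormula,
      (D.isQuotient_left N).realize_quotientFormula]
    intro hlt
    rw [BracketData.node_realize_snocTerm y ψ _ hlt, List.forall_mem_append,
      List.forall_mem_singleton]
    rfl
  simp only [Formula.realize_imp, Formula.realize_iff, Formula.realize_inf,
    realize_shortFormula_iff_short, realize_satFormula_iff_sat, hq.realize_quotientFormula] at this
  exact this hv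

end Child

theorem exists_maximal (θ : (bracketLang L' L m).Formula (α ⊕ Unit)) (v : α → M)
    (hne : ∃ x : M, θ.Realize (Sum.elim v fun _ => x)) :
    ∃ u : M, Maximal (fun x => θ.Realize (Sum.elim v fun _ => x)) u := by
  have := realize_of_carrier v (maximalFormula θ) fun D N w => by
    rw [realize_maximalFormula]
    rintro ⟨x, hx⟩
    obtain ⟨_, ⟨u, hu, rfl⟩, hmax⟩ := exists_prefix_maximal (n := N)
      (P := fun l => ∃ y : D.Carrier N, θ.Realize (Sum.elim w fun _ => y) ∧ y.node = l)
      (by rintro _ ⟨y, -, rfl⟩; exact y.length_node_le) ⟨x, hx, rfl⟩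
    exact ⟨u, hu, fun y hy => hmax y.node ⟨y, hy, rfl⟩⟩
  exact (realize_maximalFormula θ v).1 this hne

theorem exists_isGreatest {P : Set M} (θ : (bracketLang L' L m).Formula (α ⊕ Unit)) (v : α → M)
    (hP : ∀ x, x ∈ P ↔ θ.Realize (Sum.elim v fun _ => x)) (hne : P.Nonempty)
    (htotal : ∀ x ∈ P, ∀ y ∈ P, x ≤ y ∨ y ≤ x) : ∃ u, IsGreatest P u := by
  obtain ⟨x, hx⟩ := hne
  obtain ⟨u, hu, hmax⟩ := exists_maximal θ v ⟨x, (hP x).1 hx⟩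
  exact ⟨u, (hP u).2 hu, fun y hy =>
    (htotal y hy u ((hP u).2 hu)).elim id (hmax ((hP y).1 hy))⟩

end Models

section Coding

variable {L' L : FirstOrder.Language.{0, 0}} {m : ℕ} {T' : L'.Theory} {T : L.Theory}
  {φ : L.Formula (Fin m ⊕ Fin m)} {M : Theory.ModelType.{0, 0, 0} (bracketTheory T' T φ)}
  {N₁ N₂ : Type} {h₁ : M → N₁} {h₂ : M → N₂}

/-- The left endpoint of the interval coding a node, in the quotient on the right side. -/
def openPoint (h₂ : M → N₂) (v : M) (j : Fin m) : N₂ :=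
  h₂ ((opnTerm (.var v) j : (bracketLang L' L m).Term M).realize id)

/-- The right endpoint of the interval coding a node, in the quotient on the right side. -/
def closePoint (h₂ : M → N₂) (v : M) (j : Fin m) : N₂ :=
  h₂ ((clsTerm (.var v) j : (bracketLang L' L m).Term M).realize id)

theorem map_realize_opnTerm {α : Type} (t : (bracketLang L' L m).Term α) (v : α → M) (j : Fin m) :
    h₂ ((opnTerm t j).realize v) = openPoint h₂ (t.realize v) j := by
  simp only [openPoint, opnTerm, Term.realize_functions_apply₁, Term.realize_var, id]

theorem map_realize_clsTerm {α : Type} (t : (bracketLang L' L m).Term α) (v : α → M) (j : Fin m) :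
    h₂ ((clsTerm t j).realize v) = closePoint h₂ (t.realize v) j := by
  simp only [closePoint, clsTerm, Term.realize_functions_apply₁, Term.realize_var, id]

variable [L'.Structure N₁] [L.Structure N₂]

theorem rel_openPoint (hq₂ : IsQuotient (rightHom L' L m) BracketFun.repRight.symbol h₂) {x y : M}
    (hxy : x < y) : φ.Realize (Sum.elim (openPoint h₂ x) (openPoint h₂ y)) := by
  have := realize_of_carrier (id : M → M) ((preFormula (.var x) (.var y)).imp
    ((preFormula (.var y) (.var x)).not.imp
      (rightFormula φ (opnTerm (.var x)) (opnTerm (.var y))))) fun D N v => by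
    simpa [(D.isQuotient_right N).realize_quotientFormula] using
      fun h h' => D.chain_edge _ _ (openPt_lt_openPt (v := (v x).node) (w := (v y).node) h h')
  simp only [Formula.realize_imp, Formula.realize_not, realize_preFormula_iff_le,
    hq₂.realize_quotientFormula] at this
  exact this hxy.le hxy.not_ge

theorem rel_openPoint_closePoint (hq₂ : IsQuotient (rightHom L' L m) BracketFun.repRight.symbol h₂)
    {x y : M} (hyx : y ≤ x) : φ.Realize (Sum.elim (openPoint h₂ x) (closePoint h₂ y)) := by
  have := realize_of_carrier (id : M → M) ((preFormula (.var y) (.var x)).imp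
    (rightFormula φ (opnTerm (.var x)) (clsTerm (.var y)))) fun D N v => by
    simpa [(D.isQuotient_right N).realize_quotientFormula] using
      fun h => D.chain_edge _ _ (openPt_lt_closePt (v := (v x).node) (w := (v y).node) h)
  simp only [Formula.realize_imp, realize_preFormula_iff_le, hq₂.realize_quotientFormula] at this
  exact this hyx

theorem le_total_or_rel_closePoint
    (hq₂ : IsQuotient (rightHom L' L m) BracketFun.repRight.symbol h₂) (x y : M) :
    (x ≤ y ∨ y ≤ x) ∨ φ.Realize (Sum.elim (closePoint h₂ x) (openPoint h₂ y)) ∨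
      φ.Realize (Sum.elim (closePoint h₂ y) (openPoint h₂ x)) := by
  have := realize_of_carrier (id : M → M)
    ((preFormula (.var x) (.var y) ⊔ preFormula (.var y) (.var x)) ⊔
      (rightFormula φ (clsTerm (.var x)) (opnTerm (.var y)) ⊔
        rightFormula φ (clsTerm (.var y)) (opnTerm (.var x)))) fun D N v => by
    simpa [(D.isQuotient_right N).realize_quotientFormula] using
      (prefix_or_closePt_lt (v x).node (v y).node).imp_right
        (Or.imp (D.chain_edge _ _) (D.chain_edge _ _))
  simp only [Formula.realize_sup, realize_preFormula_iff_le, hq₂.realize_quotientFormula] at this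
  exact this

theorem not_rel_of_rel_of_rel (hq₂ : IsQuotient (rightHom L' L m) BracketFun.repRight.symbol h₂)
    {x y z : Fin m → N₂} (hxy : φ.Realize (Sum.elim x y)) (hyz : φ.Realize (Sum.elim y z)) :
    ¬ φ.Realize (Sum.elim z x) := by
  obtain ⟨x, rfl⟩ := hq₂.surjective.comp_left x
  obtain ⟨y, rfl⟩ := hq₂.surjective.comp_left y
  obtain ⟨z, rfl⟩ := hq₂.surjective.comp_left z
  have := realize_of_carrier (id : M → M)
    ((rightFormula φ (fun j => .var (x j)) fun j => .var (y j)).imp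
      ((rightFormula φ (fun j => .var (y j)) fun j => .var (z j)).imp
        (rightFormula φ (fun j => .var (z j)) fun j => .var (x j)).not)) fun D N v => by
    simpa only [Formula.realize_imp, Formula.realize_not,
      (D.isQuotient_right N).realize_quotientFormula] using D.no_triangle _ _ _
  simp only [Formula.realize_imp, Formula.realize_not, hq₂.realize_quotientFormula] at this
  exact this hxy hyz

theorem bddAbove_setOf_rel (hq₂ : IsQuotient (rightHom L' L m) BracketFun.repRight.symbol h₂)
    (e : Fin m → N₂) : BddAbove {x | φ.Realize (Sum.elim (openPoint h₂ x) e) ∧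
      φ.Realize (Sum.elim e (closePoint h₂ x))} := by
  rcases Set.eq_empty_or_nonempty {x | φ.Realize (Sum.elim (openPoint h₂ x) e) ∧
    φ.Realize (Sum.elim e (closePoint h₂ x))} with hempty | hne
  · rw [hempty]
    exact @bddAbove_empty M _ ⟨root M⟩
  obtain ⟨e, rfl⟩ := hq₂.surjective.comp_left e
  refine (exists_isGreatest (rightFormula φ (opnTerm (.var (.inr ())))
    (fun j => .var (.inl (e j))) ⊓ rightFormula φ (fun j => .var (.inl (e j)))
      (clsTerm (.var (.inr ())))) id (fun d => ?_) hne fun x hx y hy => ?_).imp fun u hu => hu.2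
  · simp only [Formula.realize_inf, hq₂.realize_quotientFormula, map_realize_opnTerm,
      map_realize_clsTerm]
    exact Iff.rfl
  · exact (le_total_or_rel_closePoint hq₂ x y).resolve_right fun h =>
      h.elim (fun h => not_rel_of_rel_of_rel hq₂ h hy.1 hx.2)
        fun h => not_rel_of_rel_of_rel hq₂ h hx.1 hy.2

/-- The nodes that can be extended `k` times and whose members are consistent with `s`. -/
def consistentNodes (h₁ : M → N₁) (k : ℕ) (s : Finset (ParamFormula L' N₁ 1)) : Set M :=
  {v | Short k v ∧ ∃ y, Sat y v ∧ ∀ ψ ∈ s, ψ.Realize fun _ => h₁ y}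

theorem isLowerSet_consistentNodes (k : ℕ) (s : Finset (ParamFormula L' N₁ 1)) :
    IsLowerSet (consistentNodes h₁ k s) := fun _ _ hvw ⟨hshort, y, hy, hs⟩ =>
  ⟨hshort.anti hvw, y, hy.anti hvw, hs⟩

theorem root_mem_consistentNodes (hh : Function.Surjective h₁) (k : ℕ)
    {s : Finset (ParamFormula L' N₁ 1)} {e : Fin 1 → N₁} (he : ∀ ψ ∈ s, ψ.Realize e) :
    root M ∈ consistentNodes h₁ k s := by
  obtain ⟨y, hy⟩ := hh (e 0)
  refine ⟨short_root k, y, sat_root y, ?_⟩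
  rwa [hy, show (fun _ => e 0) = e from funext fun i => congrArg e (Subsingleton.elim 0 i)]

theorem exists_formula_mem_consistentNodes
    (hq₁ : IsQuotient (leftHom L' L m) BracketFun.repLeft.symbol h₁) (k : ℕ)
    (s : Finset (ParamFormula L' N₁ 1)) : ∃ θ : (bracketLang L' L m).Formula (M ⊕ Unit),
      ∀ v : M, v ∈ consistentNodes h₁ k s ↔ θ.Realize (Sum.elim id fun _ => v) := by
  choose a ha using fun ψ : s => hq₁.surjective.comp_left ψ.1.par
  let witness : (bracketLang L' L m).Formula ((M ⊕ Unit) ⊕ Unit) :=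
    satFormula (.var (.inr ())) (.var (.inl (.inr ()))) ⊓
      Formula.iInf fun ψ : s => leftFormula ψ.1.toFormula (fun _ => .var (.inr ()))
        fun j => .var (.inl (.inl (a ψ j)))
  have realize_witness : ∀ (v : M) (y : Unit → M),
      witness.Realize (Sum.elim (Sum.elim id fun _ => v) y) ↔
        Sat (y ()) v ∧ ∀ ψ ∈ s, ψ.Realize fun _ => h₁ (y ()) := by
    intro v y
    have par_eq : ∀ ψ : s, ψ.1.par = fun j => h₁ (a ψ j) := fun ψ => (ha ψ).symm
    simp only [witness, Formula.realize_inf, realize_satFormula_iff_sat, Formula.realize_iInf,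
      hq₁.realize_quotientFormula, Term.realize_var, Sum.elim_inl, Sum.elim_inr, id,
      ← par_eq, Subtype.forall, ParamFormula.Realize]
  refine ⟨shortFormula k (.var (.inr ())) ⊓ witness.iExs Unit, fun v => ?_⟩
  simp only [Formula.realize_inf, Formula.realize_iExs, realize_shortFormula_iff_short,
    realize_witness]
  exact and_congr_right fun _ => (Equiv.funUnique Unit M).symm.exists_congr_right (q := fun y =>
    Sat (y ()) v ∧ ∀ ψ ∈ s, ψ.Realize fun _ => h₁ (y ()))

theorem intervalCoding (hq₁ : IsQuotient (leftHom L' L m) BracketFun.repLeft.symbol h₁)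
    (hq₂ : IsQuotient (rightHom L' L m) BracketFun.repRight.symbol h₂) {ι : Type}
    (k : ι → ℕ) (s : ι → Finset (ParamFormula L' N₁ 1)) :
    IntervalCoding (fun a b : Fin m → N₂ => φ.Realize (Sum.elim a b)) (openPoint h₂)
      (closePoint h₂) fun i => consistentNodes h₁ (k i) (s i) where
  opn_opn _ _ := rel_openPoint hq₂
  opn_cls _ _ := rel_openPoint_closePoint hq₂
  le_of_rel x y w e hx hy hxe hey := by
    by_contra hxy
    have hyx : y < x := lt_of_le_not_ge ((le_total_of_le hx hy).resolve_left hxy) hxy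
    exact not_rel_of_rel_of_rel hq₂ (rel_openPoint hq₂ hyx) hxe hey
  exists_isGreatest_rel x y e hxy hxe := by
    obtain ⟨e, rfl⟩ := hq₂.surjective.comp_left e
    refine exists_isGreatest (preFormula (.var (.inr ())) (.var (.inl y)) ⊓
      rightFormula φ (opnTerm (.var (.inr ()))) fun j => .var (.inl (e j))) id (fun d => ?_)
      ⟨x, hxy, hxe⟩ fun d hd d' hd' => le_total_of_le hd.1 hd'.1
    simp only [Formula.realize_inf, realize_preFormula_iff_le, hq₂.realize_quotientFormula,
      map_realize_opnTerm]
    exact Iff.rfl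
  isLowerSet i := isLowerSet_consistentNodes (k i) (s i)
  exists_isGreatest_mem x y i hxy hx := by
    obtain ⟨θ, hθ⟩ := exists_formula_mem_consistentNodes hq₁ (k i) (s i)
    refine exists_isGreatest (preFormula (.var (.inr ())) (.var (.inl y)) ⊓ θ) id (fun d => ?_)
      ⟨x, hxy, hx⟩ fun d hd d' hd' => le_total_of_le hd.1 hd'.1
    rw [Formula.realize_inf, realize_preFormula_iff_le, ← hθ]
    exact Iff.rfl
  bddAbove := bddAbove_setOf_rel hq₂

end Coding

section Interpretations

open Filter

variable {L' L : FirstOrder.Language.{0, 0}} {m : ℕ} {T' : L'.Theory} {T : L.Theory}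
  {φ : L.Formula (Fin m ⊕ Fin m)}

theorem interpretsIn_of_isQuotient {L₁ : FirstOrder.Language.{0, 0}} {T₁ : L₁.Theory}
    {ι : L₁ →ᴸ bracketLang L' L m} {ρ : (bracketLang L' L m).Functions 1}
    (hq : ∀ (D : BracketData T' T φ) (N : ℕ), ∃ (A : Theory.ModelType.{0, 0, 0} T₁)
      (g : D.Carrier N → A), IsQuotient ι ρ g ∧ ∀ x, g (Structure.funMap ρ ![x]) = g x) :
    (quotientInterpretation ι ρ).InterpretsIn (bracketTheory T' T φ) T₁ := by
  intro M
  have relMap_iff : ∀ {n : ℕ} (R : L₁.Relations n) (f : Fin n → M),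
      Structure.RelMap (ι.onRelation R) f ↔
        Structure.RelMap (ι.onRelation R) fun i => Structure.funMap ρ ![f i] := fun R f => by
    have := realize_of_carrier f (((ι.onRelation R).formula fun i => .var i).iff
      ((ι.onRelation R).formula fun i => ρ.apply₁ (.var i))) fun D N v => by
        obtain ⟨A, g, hg, hρ⟩ := hq D N
        simp only [Formula.realize_iff, Formula.realize_rel, Term.realize_functions_apply₁,
          Term.realize_var, ← hg.relMap_iff, hρ]
    simpa only [Formula.realize_iff, Formula.realize_rel, Term.realize_functions_apply₁,
      Term.realize_var] using this
  have funMap_eq : ∀ {n : ℕ} (F : L₁.Functions n) (f : Fin n → M),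
      Structure.funMap ρ ![Structure.funMap (ι.onFunction F) f] = Structure.funMap ρ
        ![Structure.funMap (ι.onFunction F) fun i => Structure.funMap ρ ![f i] ] := fun F f => by
    have := realize_of_carrier f ((ρ.apply₁ (.func (ι.onFunction F) .var)).equal
      (ρ.apply₁ (.func (ι.onFunction F) fun i => ρ.apply₁ (.var i)))) fun D N v => by
        obtain ⟨A, g, hg, hρ⟩ := hq D N
        simp only [Formula.realize_equal, Term.realize_functions_apply₁, Term.realize,
          ← hg.eq_iff, hg.map_fun, hρ]
    simpa only [Formula.realize_equal, Term.realize_functions_apply₁, Term.realize] using this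
  obtain ⟨N, _, h, hh⟩ := exists_isQuotient ι ρ M relMap_iff funMap_eq
  have : N ⊨ T₁ := ⟨fun σ hσ => (hh.realize_translate_sentence σ).1
    (M.is_model.realize_of_mem _ fun D => .of_forall fun n => by
      obtain ⟨A, g, hg, -⟩ := hq D n
      exact (hg.realize_translate_sentence σ).2 (A.is_model.realize_of_mem σ hσ))⟩
  have : Nonempty N := M.nonempty'.map h
  exact ⟨.of T₁ N, h ∘ (domEquiv ι ρ M).symm, (represents_iff_isQuotient _).2 hh⟩

theorem interpretsIn_left :
    (quotientInterpretation (leftHom L' L m) BracketFun.repLeft.symbol).InterpretsIn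
      (bracketTheory T' T φ) T' :=
  interpretsIn_of_isQuotient fun D N => ⟨D.left, _, D.isQuotient_left N, fun _ => rfl⟩

theorem interpretsIn_right :
    (quotientInterpretation (rightHom L' L m) BracketFun.repRight.symbol).InterpretsIn
      (bracketTheory T' T φ) T :=
  interpretsIn_of_isQuotient fun D N => ⟨D.right, _, D.isQuotient_right N, fun _ => rfl⟩

theorem IsQuotient.elementarilyEquivalent_of_product {L₁ L₀ : FirstOrder.Language.{0, 0}}
    {ι : L₁ →ᴸ L₀} {ρ : L₀.Functions 1} {J : Type} {U : Ultrafilter J} {C : J → Type}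
    [∀ j, L₀.Structure (C j)] [∀ j, Nonempty (C j)] {A B : Type} [L₁.Structure A]
    [L₁.Structure B] {h : (U : Filter J).Product C → A} (hh : IsQuotient ι ρ h)
    {g : ∀ j, C j → B} (hg : ∀ j, IsQuotient ι ρ (g j)) : A ≅[L₁] B :=
  elementarilyEquivalent_iff.2 fun σ => by
    rw [← hh.realize_translate_sentence, Ultraproduct.sentence_realize]
    simp only [fun j => (hg j).realize_translate_sentence σ, eventually_const]

theorem jointModels_bracketTheory (hφ : ∀ A : Theory.ModelType.{0, 0, 0} T, FinitarySOP3 φ A) :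
    JointModels (bracketTheory T' T φ) T' T
      (quotientInterpretation (leftHom L' L m) BracketFun.repLeft.symbol)
      (quotientInterpretation (rightHom L' L m) BracketFun.repRight.symbol) := by
  intro A₁ A₂
  obtain ⟨D, rfl, hD⟩ := exists_bracketData (T' := T') hφ A₁ A₂
  let K := (hyperfilter ℕ : Filter ℕ).Product D.Carrier
  let _ : (bracketLang L' L m).Structure K := Ultraproduct.structure
  have : K ⊨ bracketTheory T' T φ := ⟨fun σ hσ => (Ultraproduct.sentence_realize σ).2
    ((hσ D).filter_mono (Nat.cofinite_eq_atTop ▸ hyperfilter_le_cofinite))⟩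
  let M := Theory.ModelType.of (bracketTheory T' T φ) K
  obtain ⟨N₁, g₁, h₁⟩ := interpretsIn_left M
  obtain ⟨N₂, g₂, h₂⟩ := interpretsIn_right M
  exact ⟨M, N₁, g₁, N₂, g₂, h₁, h₂,
    ((represents_iff_isQuotient g₁).1 h₁).elementarilyEquivalent_of_product D.isQuotient_left,
    (((represents_iff_isQuotient g₂).1 h₂).elementarilyEquivalent_of_product
      D.isQuotient_right).trans hD⟩

end Interpretations

section Cardinality

variable {L' L : FirstOrder.Language.{0, 0}} {m : ℕ} {c : Cardinal.{0}}

theorem mk_sigma_nat_le {f : ℕ → Type} (hc : ℵ₀ ≤ c) (hf : ∀ k, #(f k) ≤ c) :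
    #(Σ k, f k) ≤ c := by
  rw [mk_sigma]
  exact (sum_le_mk_mul_iSup _).trans (mul_le_of_le hc (mk_le_aleph0.trans hc) (ciSup_le' hf))

theorem mk_formula_le (hc : ℵ₀ ≤ c) (hL : L.card ≤ c) (α : Type) [Countable α] :
    #(L.Formula α) ≤ c := by
  have hinj : #(L.Formula α) ≤ #(Σ n, L.BoundedFormula α n) :=
    mk_le_of_injective (sigma_mk_injective (β := L.BoundedFormula α) (i := 0))
  have hcard := BoundedFormula.card_le (L := L) (α := α)
  simp only [lift_id] at hcard
  exact (hinj.trans hcard).trans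
    (max_le hc (add_le_of_le hc (mk_le_aleph0.trans hc) hL))

theorem mk_paramFormula_lt {N : Type} [L.Structure N] {n : ℕ} {lam : Cardinal.{0}} (hlam : ℵ₀ < lam)
    (hL : L.card < lam) {A : Set N} (hA : #A < lam) {p : Set (ParamFormula L N n)}
    (hpA : ∀ ψ ∈ p, ∀ j, ψ.par j ∈ A) : #p < lam := by
  let c : Cardinal.{0} := max (max ℵ₀ L.card) #A
  have hc : ℵ₀ ≤ c := (le_max_left _ _).trans (le_max_left _ _)
  let toSigma : p → Σ k : ℕ, L.Formula (Fin n ⊕ Fin k) × (Fin k → A) := fun ψ =>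
    ⟨ψ.1.k, ψ.1.toFormula, fun j => ⟨ψ.1.par j, hpA _ ψ.2 j⟩⟩
  let ofSigma : (Σ k : ℕ, L.Formula (Fin n ⊕ Fin k) × (Fin k → A)) → ParamFormula L N n :=
    fun x => ⟨x.1, x.2.1, fun j => x.2.2 j⟩
  have toSigma_injective : Function.Injective toSigma :=
    (show ofSigma ∘ toSigma = Subtype.val from rfl) ▸ Subtype.val_injective |>.of_comp
  refine ((mk_le_of_injective toSigma_injective).trans (mk_sigma_nat_le hc fun k => ?_)).trans_lt
    (max_lt (max_lt hlam hL) hA : c < lam)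
  rw [mk_prod, lift_id, lift_id]
  refine mul_le_of_le hc (mk_formula_le hc ((le_max_right _ _).trans (le_max_left _ _)) _) ?_
  rw [mk_arrow, lift_id, lift_id, mk_fin, power_natCast]
  exact (pow_le_pow_left' (le_max_right _ _) k).trans (power_nat_le hc)

theorem mk_sigma_bracketFun_le (hc : ℵ₀ ≤ c) (hL' : L'.card ≤ c) :
    #(Σ n, BracketFun L' m n) ≤ c := by
  let F : (Σ k : ℕ, L'.Formula (Fin 1 ⊕ Fin k)) ⊕ (Fin m ⊕ Fin m) ⊕ Fin 3 →
      Σ n, BracketFun L' m n :=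
    Sum.elim (fun ψ => ⟨_, .snoc ψ.2⟩) <|
      Sum.elim (Sum.elim (fun j => ⟨_, .opn j⟩) fun j => ⟨_, .cls j⟩)
        ![⟨_, .repLeft⟩, ⟨_, .repRight⟩, ⟨_, .nil⟩]
  have hF : Function.Surjective F := by
    rintro ⟨_, _ | _ | _ | ψ | j | j⟩
    · exact ⟨.inr (.inr 0), rfl⟩
    · exact ⟨.inr (.inr 1), rfl⟩
    · exact ⟨.inr (.inr 2), rfl⟩
    · exact ⟨.inl ⟨_, ψ⟩, rfl⟩
    · exact ⟨.inr (.inl (.inl j)), rfl⟩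
    · exact ⟨.inr (.inl (.inr j)), rfl⟩
  refine (mk_le_of_surjective hF).trans ?_
  rw [mk_sum, lift_id, lift_id]
  exact add_le_of_le hc (mk_sigma_nat_le hc fun k => mk_formula_le hc hL' _)
    (mk_le_aleph0.trans hc)

theorem countable_sigma_bracketRel : Countable (Σ n, BracketRel n) := by
  let F : ℕ ⊕ Fin 2 → Σ n, BracketRel n :=
    Sum.elim (fun k => ⟨_, .short k⟩) ![⟨_, .pre⟩, ⟨_, .sat⟩]
  refine Function.Surjective.countable (f := F) ?_
  rintro ⟨_, k | _ | _⟩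
  · exact ⟨.inl k, rfl⟩
  · exact ⟨.inr 0, rfl⟩
  · exact ⟨.inr 1, rfl⟩

theorem card_bracketLang_le (hc : ℵ₀ ≤ c) (hL' : L'.card ≤ c) (hL : L.card ≤ c) :
    (bracketLang L' L m).card ≤ c := by
  simp only [Language.card_sum, lift_id]
  refine add_le_of_le hc (add_le_of_le hc hL' hL) ?_
  rw [Language.card, Language.Symbols, mk_sum, lift_id, lift_id]
  have := countable_sigma_bracketRel
  exact add_le_of_le hc (mk_sigma_bracketFun_le hc hL') (mk_le_aleph0.trans hc)

theorem card_le_theoryCard (T : L.Theory) : L.card ≤ theoryCard T :=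
  (self_le_add_right _ _).trans (self_le_add_right _ _)

theorem aleph0_le_theoryCard (T : L.Theory) : ℵ₀ ≤ theoryCard T :=
  self_le_add_left _ _

theorem theoryCard_le (hc : ℵ₀ ≤ c) (hL : L.card ≤ c) (T : L.Theory) : theoryCard T ≤ c :=
  add_le_of_le hc (add_le_of_le hc hL ((mk_set_le T).trans (mk_formula_le hc hL _))) hc

theorem theoryCard_bracketTheory_le {T' : L'.Theory} {T : L.Theory}
    {φ : L.Formula (Fin m ⊕ Fin m)} :
    theoryCard (bracketTheory T' T φ) ≤ theoryCard T' + theoryCard T := by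
  have hc : ℵ₀ ≤ theoryCard T' + theoryCard T :=
    (aleph0_le_theoryCard T').trans (self_le_add_right _ _)
  exact theoryCard_le hc (card_bracketLang_le hc
    ((card_le_theoryCard T').trans (self_le_add_right _ _))
    ((card_le_theoryCard T).trans (self_le_add_left _ _))) _

end Cardinality

section Transfer

variable {L' L : FirstOrder.Language.{0, 0}} {m : ℕ} {T' : L'.Theory} {T : L.Theory}
  {φ : L.Formula (Fin m ⊕ Fin m)} {M : Theory.ModelType.{0, 0, 0} (bracketTheory T' T φ)}
  {N₁ N₂ : Type} [S₁ : L'.Structure N₁] [S₂ : L.Structure N₂] {h₁ : M → N₁} {h₂ : M → N₂}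
  {p : Set (ParamFormula L' N₁ 1)} {ψ : ParamFormula L' N₁ 1}

/-- The nodes approximating the type `p`: those that can be extended arbitrarily often and whose
members are consistent with every finite part of `p`. -/
abbrev TypeNodes (h₁ : M → N₁) (p : Set (ParamFormula L' N₁ 1)) : Type :=
  {v : M // ∀ i : ℕ × Finset p,
    v ∈ consistentNodes h₁ i.1 (i.2.map (Function.Embedding.subtype (· ∈ p)))}

/-- The nodes approximating the type `p` whose members imply `ψ`. -/
def implyingNodes (h₁ : M → N₁) (p : Set (ParamFormula L' N₁ 1)) (ψ : ParamFormula L' N₁ 1) :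
    Set (TypeNodes h₁ p) :=
  {v | ∀ y, Sat y v.1 → ψ.Realize fun _ => h₁ y}

theorem isUpperSet_implyingNodes : IsUpperSet (implyingNodes h₁ p ψ) :=
  fun _ _ hvw hv y hy => hv y (hy.anti hvw)

theorem isCofinal_implyingNodes
    (hq₁ : IsQuotient (leftHom L' L m) BracketFun.repLeft.symbol h₁) (hψ : ψ ∈ p) :
    IsCofinal (implyingNodes h₁ p ψ) := by
  classical
  intro v
  obtain ⟨a, ha⟩ := hq₁.surjective.comp_left ψ.par
  have hshort : ∀ k, Short k v.1 := fun k => (v.2 (k, ∅)).1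
  have sat_iff : ∀ y, Sat y (child ψ.toFormula v.1 a) ↔ Sat y v.1 ∧ ψ.Realize fun _ => h₁ y := by
    intro y
    rw [sat_child_iff ψ.toFormula a hq₁ (hshort 1), ParamFormula.Realize, ← ha]
    rfl
  refine ⟨⟨child ψ.toFormula v.1 a, fun ⟨k, s⟩ => ⟨short_child ψ.toFormula a (hshort (k + 1)), ?_⟩⟩,
    fun y hy => ((sat_iff y).1 hy).2, le_child ψ.toFormula a (hshort 1)⟩
  obtain ⟨-, y, hy, hs⟩ := v.2 (0, insert ⟨ψ, hψ⟩ s)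
  simp only [Finset.map_insert, Finset.forall_mem_insert] at hs
  exact ⟨y, (sat_iff y).2 ⟨hy, hs.1⟩, hs.2⟩

theorem isChainClosed_typeNodes (hq₁ : IsQuotient (leftHom L' L m) BracketFun.repLeft.symbol h₁)
    (hq₂ : IsQuotient (rightHom L' L m) BracketFun.repRight.symbol h₂) {lam : Cardinal.{0}}
    (hlam : ℵ₀ < lam) (hs : IsSaturatedAt L N₂ S₂ lam) (hp : #p < lam)
    (hfin : ∀ s : Finset (ParamFormula L' N₁ 1), ↑s ⊆ p → ∃ e : Fin 1 → N₁, ∀ ψ ∈ s, ψ.Realize e) :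
    IsChainClosed (TypeNodes h₁ p) lam := by
  refine (intervalCoding hq₁ hq₂ _ _).isChainClosed (hs.fillsCuts hlam.le φ) ?_
    ⟨root M, fun i => ?_⟩
  · classical
    rw [mk_prod, lift_id, lift_id, mk_nat]
    exact mul_lt_of_lt hlam.le hlam <| ((mk_le_of_surjective List.toFinset_surjective).trans
      (mk_list_le_max _)).trans_lt (max_lt hlam hp)
  · obtain ⟨e, he⟩ := hfin (i.2.map (Function.Embedding.subtype (· ∈ p))) fun ψ hψ => by
      obtain ⟨χ, -, rfl⟩ := Finset.mem_map.1 hψ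
      exact χ.2
    exact root_mem_consistentNodes hq₁.surjective i.1 he

theorem isSaturatedAt_of_isQuotient
    (hq₁ : IsQuotient (leftHom L' L m) BracketFun.repLeft.symbol h₁)
    (hq₂ : IsQuotient (rightHom L' L m) BracketFun.repRight.symbol h₂) {lam : Cardinal.{0}}
    (hlam : ℵ₀ < lam) (hL' : L'.card < lam) (hs : IsSaturatedAt L N₂ S₂ lam) :
    IsSaturatedAt L' N₁ S₁ lam := by
  intro A hA p hpA hfin
  have hp : #p < lam := mk_paramFormula_lt hlam hL' hA hpA
  obtain ⟨v, hv⟩ := (isChainClosed_typeNodes hq₁ hq₂ hlam hs hp hfin).exists_forall_mem hp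
    (D := fun ψ : p => implyingNodes h₁ p ψ) (fun _ => isUpperSet_implyingNodes)
    fun ψ => isCofinal_implyingNodes hq₁ ψ.2
  obtain ⟨-, y, hy, -⟩ := v.2 (0, ∅)
  exact ⟨fun _ => h₁ y, fun ψ hψ => hv ⟨ψ, hψ⟩ y hy⟩

theorem transferClause_bracketTheory {lam : Cardinal.{0}} (hlam : ℵ₀ < lam) (hL' : L'.card < lam) :
    TransferClause (bracketTheory T' T φ)
      (quotientInterpretation (leftHom L' L m) BracketFun.repLeft.symbol)
      (quotientInterpretation (rightHom L' L m) BracketFun.repRight.symbol) lam lam 0 :=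
  fun _ _ _ _ g₁ _ _ g₂ h₁ h₂ => isSaturatedAt_of_isQuotient
    ((represents_iff_isQuotient g₁).1 h₁) ((represents_iff_isQuotient g₂).1 h₂) hlam hL'

end Transfer

theorem triangleStarMaximal_of_SOP3_general {L : FirstOrder.Language.{0, 0}} (T : L.Theory)
    {m : ℕ} (φ : L.Formula (Fin m ⊕ Fin m))
    (hφ : ∀ A : Theory.ModelType.{0, 0, 0} T, FinitarySOP3 φ A) (lam : Cardinal.{0}) :
    TriangleStarMaximal T lam := fun _ T' hT' =>
  ⟨_, bracketTheory T' T φ, _, _, theoryCard_bracketTheory_le, interpretsIn_left,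
    interpretsIn_right, jointModels_bracketTheory hφ, transferClause_bracketTheory
      ((aleph0_le_theoryCard T').trans_lt hT') ((card_le_theoryCard T').trans_lt hT')⟩

/-- If `T` is a complete first-order theory with `|T| < λ` and `T` has
SOP₃ (exemplified by some formula in some model of `T`), then `T` is `⊲*_λ`-maximal. -/
theorem triangleStarMaximal_of_SOP3 {L : FirstOrder.Language.{0, 0}} (T : L.Theory)
    (hcomp : T.IsComplete) (𝓜 : Theory.ModelType.{0, 0, 0} T) {m : ℕ}
    (φ : L.Formula (Fin m ⊕ Fin m)) (hsop : ExemplifiesSOP3 φ 𝓜)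
    (lam : Cardinal.{0}) (hT : theoryCard T < lam) :
    TriangleStarMaximal T lam := by
  exact triangleStarMaximal_of_SOP3_general T φ
    (fun A => hsop.finitarySOP3.of_elementarilyEquivalent
      (hcomp.models_elementarily_equivalent 𝓜 A)) lam

end SopPaper
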